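/- arXiv:2509.10211 — 7 statements merged into one kernel-verified Lean document; each statement's English description precedes it below -/
import Mathlib

section
/- Let d ≥ 1 be an integer and α ∈ (0,1). Let g : (0,1] → ℝ be continuous with lim_{r→0⁺} r^{2−2α} g(r) = 0, and suppose that the limit L := lim_{r→0⁺} ( g(r) − (d+2α) r^{−d−2} ∫₀^r u^{d+1} g(u) du ) exists in ℝ. Then lim_{r→0⁺} r^{−d−2} ∫₀^r u^{d+1} g(u) du = L / (2(1−α)) and lim_{r→0⁺} g(r) = (d+2) L / (2(1−α)). -/
open MeasureTheory Filter

/-! With `γ = d + 2α` and `G r = ∫₀^r u ^ (d + 1) g u du`, the product rule gives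
`(r ^ (-γ) G)' = r ^ (2 - 2α - 1) (g - γ r ^ (-d - 2) G)`, whose second factor tends to `L`. Hence
l'Hôpital's rule yields the limit of `r ^ (-γ) G / r ^ (2 - 2α) = r ^ (-d - 2) G`, as soon as
`r ^ (-γ) G → 0`. This last fact, which excludes the homogeneous solutions `G = c r ^ γ`, is again
l'Hôpital's rule, applied to `G' = r ^ (γ - 1) (r ^ (2 - 2α) g)`. -/

section

open Set Asymptotics
open scoped Topology

variable {E : Type*} [NormedAddCommGroup E]

theorem eventually_intervalIntegrable_nhdsGT {f : ℝ → E} {a : ℝ}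
    (hf : IntegrableAtFilter f (𝓝[>] a)) :
    ∀ᶠ b in 𝓝[>] a, IntervalIntegrable f volume a b := by
  obtain ⟨s, hs, hfs⟩ := hf
  obtain ⟨c, hac, hc⟩ := mem_nhdsGT_iff_exists_Ioc_subset.1 hs
  filter_upwards [Ioc_mem_nhdsGT hac] with b hb
  exact (intervalIntegrable_iff_integrableOn_Ioc_of_le hb.1.le).2
    (hfs.mono_set ((Ioc_subset_Ioc_right hb.2).trans hc))

theorem integrableAtFilter_nhdsGT_of_isBigO_rpow {f : ℝ → E} {γ : ℝ} (hγ : 0 < γ)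
    (hcont : ∀ᶠ r in 𝓝[>] 0, ContinuousAt f r)
    (hf : f =O[𝓝[>] 0] fun r : ℝ => r ^ (γ - 1)) :
    IntegrableAtFilter f (𝓝[>] 0) := by
  obtain ⟨c, hc_pos, hc⟩ := mem_nhdsGT_iff_exists_Ioo_subset.1 hcont
  have hmeas : StronglyMeasurableAtFilter f (𝓝[>] 0) :=
    ⟨Ioo 0 c, Ioo_mem_nhdsGT hc_pos,
      (continuousOn_of_forall_continuousAt fun _ hx => hc hx).aestronglyMeasurable
        measurableSet_Ioo⟩
  have hpow : IntegrableOn (fun r : ℝ => r ^ (γ - 1)) (Ioo 0 1) :=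
    (intervalIntegral.integrableOn_Ioo_rpow_iff zero_lt_one).2 (by linarith)
  exact hf.integrableAtFilter hmeas ⟨Ioo 0 1, Ioo_mem_nhdsGT zero_lt_one, hpow⟩

variable [NormedSpace ℝ E]

theorem norm_le_of_norm_deriv_le_of_tendsto_nhdsGT {F F' : ℝ → E} {B B' : ℝ → ℝ} {a b : ℝ}
    (hF' : ∀ x ∈ Ioc a b, HasDerivAt F (F' x) x) (hB' : ∀ x ∈ Ioc a b, HasDerivAt B (B' x) x)
    (hF : Tendsto F (𝓝[>] a) (𝓝 0)) (hB : Tendsto B (𝓝[>] a) (𝓝 0))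
    (hbound : ∀ x ∈ Ioc a b, ‖F' x‖ ≤ B' x) {x : ℝ} (hx : x ∈ Ioc a b) :
    ‖F x‖ ≤ B x := by
  have increment_le : ∀ᶠ t in 𝓝[>] a, ‖F x - F t‖ ≤ B x - B t := by
    filter_upwards [Ioo_mem_nhdsGT hx.1] with t ht
    have hsub : Icc t x ⊆ Ioc a b := fun y hy => ⟨ht.1.trans_le hy.1, hy.2.trans hx.2⟩
    have hFt : ∀ y ∈ Icc t x, HasDerivAt (fun z => F z - F t) (F' y) y :=
      fun y hy => (hF' y (hsub hy)).sub_const _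
    have hBt : ∀ y ∈ Icc t x, HasDerivAt (fun z => B z - B t) (B' y) y :=
      fun y hy => (hB' y (hsub hy)).sub_const _
    exact image_norm_le_of_norm_deriv_right_le_deriv_boundary'
      (HasDerivAt.continuousOn hFt)
      (fun y hy => (hFt y (Ico_subset_Icc_self hy)).hasDerivWithinAt) (by simp)
      (HasDerivAt.continuousOn hBt)
      (fun y hy => (hBt y (Ico_subset_Icc_self hy)).hasDerivWithinAt)
      (fun y hy => hbound y (hsub (Ico_subset_Icc_self hy))) (right_mem_Icc.2 ht.2.le)
  simpa using le_of_tendsto_of_tendsto (hF.const_sub (F x)).norm (hB.const_sub (B x)) increment_le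

theorem isLittleO_nhdsGT_of_isLittleO_deriv {F F' : ℝ → E} {B B' : ℝ → ℝ} {a : ℝ}
    (hF' : ∀ᶠ x in 𝓝[>] a, HasDerivAt F (F' x) x) (hB' : ∀ᶠ x in 𝓝[>] a, HasDerivAt B (B' x) x)
    (hF : Tendsto F (𝓝[>] a) (𝓝 0)) (hB : Tendsto B (𝓝[>] a) (𝓝 0))
    (hB'_nonneg : ∀ᶠ x in 𝓝[>] a, 0 ≤ B' x) (h : F' =o[𝓝[>] a] B') :
    F =o[𝓝[>] a] B := by
  refine isLittleO_iff.2 fun c hc => ?_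
  obtain ⟨b, hab, hb⟩ := mem_nhdsGT_iff_exists_Ioc_subset.1
    (hF'.and (hB'.and (hB'_nonneg.and (isLittleO_iff.1 h hc))))
  filter_upwards [Ioc_mem_nhdsGT hab] with x hx
  have hcB : Tendsto (fun y => c * B y) (𝓝[>] a) (𝓝 0) := by simpa using hB.const_mul c
  have hbound : ∀ y ∈ Ioc a b, ‖F' y‖ ≤ c * B' y := fun y hy => by
    obtain ⟨-, -, hB'_nonneg, hle⟩ := hb hy
    rwa [Real.norm_of_nonneg hB'_nonneg] at hle
  calc ‖F x‖ ≤ c * B x := norm_le_of_norm_deriv_le_of_tendsto_nhdsGT (fun y hy => (hb hy).1)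
        (fun y hy => (hb hy).2.1.const_mul c) hF hcB hbound hx
    _ ≤ c * ‖B x‖ := by gcongr; exact le_abs_self _

theorem tendsto_inv_smul_nhdsGT_of_hasDerivAt {F φ : ℝ → E} {B B' : ℝ → ℝ} {a : ℝ} {l : E}
    (hF' : ∀ᶠ x in 𝓝[>] a, HasDerivAt F (B' x • φ x) x)
    (hB' : ∀ᶠ x in 𝓝[>] a, HasDerivAt B (B' x) x)
    (hF : Tendsto F (𝓝[>] a) (𝓝 0)) (hB : Tendsto B (𝓝[>] a) (𝓝 0))
    (hB'_nonneg : ∀ᶠ x in 𝓝[>] a, 0 ≤ B' x) (hB_ne : ∀ᶠ x in 𝓝[>] a, B x ≠ 0)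
    (hφ : Tendsto φ (𝓝[>] a) (𝓝 l)) :
    Tendsto (fun x => (B x)⁻¹ • F x) (𝓝[>] a) (𝓝 l) := by
  have hrem' : ∀ᶠ x in 𝓝[>] a, HasDerivAt (fun x => F x - B x • l) (B' x • (φ x - l)) x := by
    filter_upwards [hF', hB'] with x hFx hBx
    rw [smul_sub]
    exact hFx.sub (hBx.smul_const l)
  have hrem : Tendsto (fun x => F x - B x • l) (𝓝[>] a) (𝓝 0) := by
    simpa using hF.sub (hB.smul_const l)
  have hderiv : (fun x => B' x • (φ x - l)) =o[𝓝[>] a] B' := by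
    have hφ_sub : (fun x => φ x - l) =o[𝓝[>] a] fun _ => (1 : ℝ) :=
      (isLittleO_one_iff ℝ).2 (tendsto_sub_nhds_zero_iff.2 hφ)
    simpa using (isBigO_refl B' (𝓝[>] a)).smul_isLittleO hφ_sub
  have hrem_isLittleO := isLittleO_nhdsGT_of_isLittleO_deriv hrem' hB' hrem hB hB'_nonneg hderiv
  refine tendsto_sub_nhds_zero_iff.1 (hrem_isLittleO.tendsto_inv_smul_nhds_zero.congr' ?_)
  filter_upwards [hB_ne] with x hx
  rw [smul_sub, inv_smul_smul₀ hx]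

theorem tendsto_rpow_neg_smul_of_hasDerivAt {F φ : ℝ → E} {l : E} {b : ℝ} (hb : 0 < b)
    (hF' : ∀ᶠ r in 𝓝[>] 0, HasDerivAt F (r ^ (b - 1) • φ r) r)
    (hF : Tendsto F (𝓝[>] 0) (𝓝 0)) (hφ : Tendsto φ (𝓝[>] 0) (𝓝 l)) :
    Tendsto (fun r => r ^ (-b) • F r) (𝓝[>] 0) (𝓝 (b⁻¹ • l)) := by
  have hpos : ∀ᶠ r : ℝ in 𝓝[>] 0, 0 < r := self_mem_nhdsWithin
  have hpow_zero : Tendsto (fun r : ℝ => r ^ b) (𝓝[>] 0) (𝓝 0) := by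
    simpa [Real.zero_rpow hb.ne'] using
      (Real.continuousAt_rpow_const 0 b (.inr hb.le)).tendsto.mono_left nhdsWithin_le_nhds
  have hF'_eq : ∀ᶠ r in 𝓝[>] 0, HasDerivAt F ((b * r ^ (b - 1)) • b⁻¹ • φ r) r := by
    filter_upwards [hF'] with r hr
    rwa [smul_smul, mul_right_comm, mul_inv_cancel₀ hb.ne', one_mul]
  have hquot := tendsto_inv_smul_nhdsGT_of_hasDerivAt hF'_eq
    (hpos.mono fun r hr => Real.hasDerivAt_rpow_const (.inl hr.ne')) hF hpow_zero
    (hpos.mono fun r hr => by positivity) (hpos.mono fun r hr => (Real.rpow_pos_of_pos hr b).ne')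
    (hφ.const_smul b⁻¹)
  exact hquot.congr' (hpos.mono fun r hr => by simp only [Real.rpow_neg hr.le])

theorem tendsto_intervalIntegral_nhdsGT {f : ℝ → E} {a : ℝ}
    (hf : IntegrableAtFilter f (𝓝[>] a)) :
    Tendsto (fun b => ∫ u in a..b, f u) (𝓝[>] a) (𝓝 0) := by
  obtain ⟨b, hb, hab⟩ :=
    ((eventually_intervalIntegrable_nhdsGT hf).and self_mem_nhdsWithin).exists
  have hcont := intervalIntegral.continuousOn_primitive_interval' hb left_mem_uIcc a left_mem_uIcc
  rw [uIcc_of_le (le_of_lt hab)] at hcont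
  simpa [ContinuousWithinAt, nhdsWithin_Ioc_eq_nhdsGT hab] using hcont.mono Ioc_subset_Icc_self

theorem eventually_hasDerivAt_intervalIntegral_nhdsGT [CompleteSpace E] {f : ℝ → E} {a : ℝ}
    (hf : IntegrableAtFilter f (𝓝[>] a)) (hcont : ∀ᶠ r in 𝓝[>] a, ContinuousAt f r) :
    ∀ᶠ r in 𝓝[>] a, HasDerivAt (fun b => ∫ u in a..b, f u) (f r) r := by
  obtain ⟨c, hac, hc⟩ := mem_nhdsGT_iff_exists_Ioo_subset.1 hcont
  filter_upwards [eventually_intervalIntegrable_nhdsGT hf, Ioo_mem_nhdsGT hac] with r hfr hr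
  exact intervalIntegral.integral_hasDerivAt_right hfr
    (ContinuousAt.stronglyMeasurableAtFilter isOpen_Ioo (fun x hx => hc hx) r hr) (hc hr)

variable {d α : ℝ}

theorem hasDerivAt_rpow_neg_smul_of_hasDerivAt {G : ℝ → E} {v : E} {r : ℝ} (hr : 0 < r)
    (hG : HasDerivAt G (r ^ (d + 1) • v) r) :
    HasDerivAt (fun r => r ^ (-(d + 2 * α)) • G r)
      (r ^ (2 - 2 * α - 1) • (v - ((d + 2 * α) * r ^ (-d - 2)) • G r)) r := by
  have hpow := Real.hasDerivAt_rpow_const (p := -(d + 2 * α)) (.inl hr.ne')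
  have hexp_v : r ^ (2 - 2 * α - 1) = r ^ (-(d + 2 * α)) * r ^ (d + 1) := by
    rw [← Real.rpow_add hr]; ring_nf
  have hexp_G : r ^ (-(d + 2 * α) - 1) = r ^ (2 - 2 * α - 1) * r ^ (-d - 2) := by
    rw [← Real.rpow_add hr]; ring_nf
  refine (hpow.smul hG).congr_deriv ?_
  rw [hexp_G, smul_smul, ← hexp_v]
  module

theorem tendsto_rpow_neg_smul_of_hasDerivAt_of_tendsto_sub {g G : ℝ → E} {L : E} (hα : α < 1)
    (hG' : ∀ᶠ r in 𝓝[>] 0, HasDerivAt G (r ^ (d + 1) • g r) r)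
    (hG : Tendsto (fun r => r ^ (-(d + 2 * α)) • G r) (𝓝[>] 0) (𝓝 0))
    (hL : Tendsto (fun r => g r - ((d + 2 * α) * r ^ (-d - 2)) • G r) (𝓝[>] 0) (𝓝 L)) :
    Tendsto (fun r => r ^ (-d - 2) • G r) (𝓝[>] 0) (𝓝 ((2 * (1 - α))⁻¹ • L)) := by
  have hderiv : ∀ᶠ r in 𝓝[>] 0, HasDerivAt (fun r => r ^ (-(d + 2 * α)) • G r)
      (r ^ (2 - 2 * α - 1) • (g r - ((d + 2 * α) * r ^ (-d - 2)) • G r)) r := by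
    filter_upwards [hG', self_mem_nhdsWithin] with r hGr hr
    exact hasDerivAt_rpow_neg_smul_of_hasDerivAt hr hGr
  have hlim := tendsto_rpow_neg_smul_of_hasDerivAt (by linarith) hderiv hG hL
  rw [show 2 * (1 - α) = 2 - 2 * α by ring]
  refine hlim.congr' ?_
  filter_upwards [self_mem_nhdsWithin] with r (hr : 0 < r)
  rw [smul_smul, ← Real.rpow_add hr]
  ring_nf

theorem identification_of_limits_general [CompleteSpace E] (hdα : 0 < d + 2 * α) (hα : α < 1)
    {g : ℝ → E} (hg : ∀ᶠ r in 𝓝[>] 0, ContinuousAt g r)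
    (h0 : Tendsto (fun r : ℝ => r ^ (2 - 2 * α) • g r) (𝓝[>] 0) (𝓝 0)) {L : E}
    (hL : Tendsto (fun r : ℝ =>
        g r - ((d + 2 * α) * r ^ (-d - 2)) • ∫ u in (0 : ℝ)..r, u ^ (d + 1) • g u)
      (𝓝[>] 0) (𝓝 L)) :
    Tendsto (fun r : ℝ => r ^ (-d - 2) • ∫ u in (0 : ℝ)..r, u ^ (d + 1) • g u)
        (𝓝[>] 0) (𝓝 ((2 * (1 - α))⁻¹ • L)) ∧
      Tendsto g (𝓝[>] 0) (𝓝 (((d + 2) / (2 * (1 - α))) • L)) := by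
  have hf_eq : ∀ᶠ r in 𝓝[>] 0,
      r ^ (d + 1) • g r = r ^ (d + 2 * α - 1) • r ^ (2 - 2 * α) • g r := by
    filter_upwards [self_mem_nhdsWithin] with r (hr : 0 < r)
    rw [smul_smul, ← Real.rpow_add hr]
    ring_nf
  have hf_cont : ∀ᶠ r in 𝓝[>] 0, ContinuousAt (fun u => u ^ (d + 1) • g u) r := by
    filter_upwards [hg, self_mem_nhdsWithin] with r hgr hr
    exact (Real.continuousAt_rpow_const r _ (.inl (ne_of_gt hr))).smul hgr
  have hf_isBigO : (fun r => r ^ (d + 1) • g r) =O[𝓝[>] 0] fun r => r ^ (d + 2 * α - 1) := by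
    simpa using ((isBigO_refl _ _).smul (h0.isBigO_one ℝ)).congr' (hf_eq.mono fun _ => Eq.symm) .rfl
  have hf_int := integrableAtFilter_nhdsGT_of_isBigO_rpow hdα hf_cont hf_isBigO
  have hG' := eventually_hasDerivAt_intervalIntegral_nhdsGT hf_int hf_cont
  have hG_rpow := tendsto_rpow_neg_smul_of_hasDerivAt hdα
    (hf_eq.mp (hG'.mono fun r hGr heq => heq ▸ hGr)) (tendsto_intervalIntegral_nhdsGT hf_int) h0
  rw [smul_zero] at hG_rpow
  have hG_lim := tendsto_rpow_neg_smul_of_hasDerivAt_of_tendsto_sub hα hG' hG_rpow hL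
  refine ⟨hG_lim, ?_⟩
  have hα_ne : 1 - α ≠ 0 := by linarith
  have hlim : L + (d + 2 * α) • (2 * (1 - α))⁻¹ • L = ((d + 2) / (2 * (1 - α))) • L := by
    match_scalars
    field_simp
    ring
  rw [← hlim]
  exact (hL.add (hG_lim.const_smul (d + 2 * α))).congr fun r => by rw [smul_smul, sub_add_cancel]

end

/-- Identification-of-limits lemma (scalar form): if `g` is continuous on `(0,1]` with
`r^{2−2α} g(r) → 0` as `r → 0⁺`, and
`g(r) − (d+2α) r^{−d−2} ∫₀^r u^{d+1} g(u) du → L`, then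
`r^{−d−2} ∫₀^r u^{d+1} g(u) du → L/(2(1−α))` and `g(r) → (d+2)L/(2(1−α))`. -/
theorem identification_of_limits (d : ℕ) (hd : 1 ≤ d) (α : ℝ) (hα : α ∈ Set.Ioo (0:ℝ) 1)
    (g : ℝ → ℝ) (hg : ContinuousOn g (Set.Ioc 0 1))
    (h0 : Tendsto (fun r : ℝ => r ^ (2 - 2*α) * g r) (nhdsWithin 0 (Set.Ioi 0)) (nhds 0))
    (L : ℝ)
    (hL : Tendsto (fun r : ℝ =>
        g r - ((d : ℝ) + 2*α) * r ^ (-(d : ℝ) - 2) * ∫ u in (0:ℝ)..r, u ^ (d+1) * g u)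
      (nhdsWithin 0 (Set.Ioi 0)) (nhds L)) :
    Tendsto (fun r : ℝ => r ^ (-(d : ℝ) - 2) * ∫ u in (0:ℝ)..r, u ^ (d+1) * g u)
        (nhdsWithin 0 (Set.Ioi 0)) (nhds (L / (2*(1-α)))) ∧
      Tendsto g (nhdsWithin 0 (Set.Ioi 0)) (nhds (((d : ℝ)+2) * L / (2*(1-α)))) := by
  have hg_cont : ∀ᶠ r in nhdsWithin 0 (Set.Ioi 0), ContinuousAt g r :=
    mem_of_superset (Ioo_mem_nhdsGT one_pos) fun _ hr => hg.continuousAt (Ioc_mem_nhds hr.1 hr.2)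
  have hdα : (0 : ℝ) < d + 2 * α := by linarith [hα.1, (d.cast_nonneg : (0 : ℝ) ≤ d)]
  have key := identification_of_limits_general hdα hα.2 hg_cont h0 (mod_cast hL)
  simp only [smul_eq_mul, inv_mul_eq_div, div_mul_eq_mul_div] at key
  exact_mod_cast key
end

section
/- Let d ≥ 1 be an integer, α ∈ (0,1), β ∈ ℝ and δ > 0 with D := (d−1)β + 1 − 2α − δ > 0. Let b_L : (0,∞) → (0,∞) and b_N : (0,∞) → ℝ be continuous and satisfy b_L(r)/r^{2α} → 1 and b_N(r)/r^{2α} → β as r → 0⁺. For r > 0 define Φ(r) := ∫₀^r (ρ^{−δ} / b_L(ρ)) · exp( −(d−1) ∫_ρ^r b_N(u)/(b_L(u) u) du ) dρ. Then Φ(r) is finite for all sufficiently small r > 0 and lim_{r→0⁺} Φ(r) / r^{1−2α−δ} = 1/D. -/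
open MeasureTheory Set Filter

/-! The function `Φ` solves `Φ' + g Φ = f` with `f ρ ∼ L ρ ^ (p - 1)` and `g u ∼ κ / u` at the
origin, where `g = (d - 1) b_N / (b_L u)`, `f = ρ ^ (-δ) / b_L`, `p = 1 - 2α - δ`, `κ = (d - 1) β`
and `L = 1`. After the rescaling `ρ = r s`, the integrand of `Φ r / r ^ p` converges pointwise on
`(0, 1)` to `L s ^ (p - 1 + κ)`. It is dominated by a multiple of `s ^ (p - 1 + κ')` for any
`κ' < κ`, which is integrable as soon as `p + κ' > 0`, so the limit is
`∫₀¹ L s ^ (p - 1 + κ) ds = L / (p + κ)`. -/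

section Duhamel

open scoped Topology

variable {f g : ℝ → ℝ} {L κ κ' p r ρ s : ℝ}

/-- The integrating factor `exp (-∫_ρ^r g)` of `y' + g y = f`, which propagates data from `ρ`
to `r`. -/
noncomputable def integratingFactor (g : ℝ → ℝ) (ρ r : ℝ) : ℝ :=
  Real.exp (-∫ u in ρ..r, g u)

/-- The integrand of Duhamel's formula `y r = ∫₀^r f ρ * exp (-∫_ρ^r g) dρ` for the solution of
`y' + g y = f` without homogeneous part; the integration variable `ρ` comes last, so that partial
application gives the integrand of `y r`. -/
noncomputable def duhamelIntegrand (g f : ℝ → ℝ) (r ρ : ℝ) : ℝ :=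
  f ρ * integratingFactor g ρ r

lemma eventually_nhdsGT_forall_mem_Ioc {a : ℝ} {P : ℝ → Prop} (h : ∀ᶠ u in 𝓝[>] a, P u) :
    ∀ᶠ r in 𝓝[>] a, ∀ u ∈ Ioc a r, P u := by
  obtain ⟨b, hab, hb⟩ := mem_nhdsGT_iff_exists_Ioo_subset.1 h
  filter_upwards [Ioo_mem_nhdsGT hab] with r hr u hu
  exact hb ⟨hu.1, hu.2.trans_lt hr.2⟩

lemma eventually_abs_le_abs_add_one (h : Tendsto f (𝓝[>] 0) (𝓝 L)) :
    ∀ᶠ r in 𝓝[>] 0, ∀ u ∈ Ioc 0 r, |f u| ≤ |L| + 1 :=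
  eventually_nhdsGT_forall_mem_Ioc (h.abs.eventually_le_const (lt_add_one _))

lemma eventually_forall_integrableOn_Icc (hg : AEMeasurable g (volume.restrict (Ioi 0)))
    (hgκ : Tendsto (fun u => u * g u) (𝓝[>] 0) (𝓝 κ)) :
    ∀ᶠ r in 𝓝[>] 0, ∀ ρ ∈ Ioc 0 r, IntegrableOn g (Icc ρ r) := by
  filter_upwards [eventually_abs_le_abs_add_one hgκ] with r hbound ρ hρ
  have hsub : Icc ρ r ⊆ Ioi 0 := fun u hu => hρ.1.trans_le hu.1
  refine IntegrableOn.of_bound measure_Icc_lt_top (hg.mono_set hsub).aestronglyMeasurable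
    ((|κ| + 1) / ρ) ?_
  filter_upwards [ae_restrict_mem measurableSet_Icc] with u hu
  have hu₀ : 0 < u := hsub hu
  calc ‖g u‖ = |u * g u| / u := by rw [abs_mul, abs_of_pos hu₀, Real.norm_eq_abs]; field_simp
    _ ≤ (|κ| + 1) / ρ := by
      gcongr
      exacts [hρ.1, hbound u ⟨hu₀, hu.2⟩, hu.1]

lemma continuousOn_integratingFactor (hg : ∀ ρ ∈ Ioc 0 r, IntegrableOn g (Icc ρ r)) :
    ContinuousOn (fun ρ => integratingFactor g ρ r) (Ioc 0 r) := by
  suffices h : ContinuousOn (fun ρ => ∫ u in ρ..r, g u) (Ioc 0 r) from h.neg.rexp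
  intro ρ hρ
  obtain ⟨a, ha, haρ⟩ := exists_between hρ.1
  have har : a ≤ r := haρ.le.trans hρ.2
  have hcont := intervalIntegral.continuousOn_primitive_interval_left (a := a) (b := r)
    (by simpa only [uIcc_of_le har] using hg a ⟨ha, har⟩)
  rw [uIcc_of_le har] at hcont
  refine (hcont ρ ⟨haρ.le, hρ.2⟩).mono_of_mem_nhdsWithin ?_
  filter_upwards [self_mem_nhdsWithin, mem_nhdsWithin_of_mem_nhds (Ioi_mem_nhds haρ)]
    with x hx hax
  exact ⟨le_of_lt hax, hx.2⟩

lemma mul_log_div_le_integral (hρ : 0 < ρ) (hρr : ρ ≤ r) (hg : IntegrableOn g (Icc ρ r))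
    (hκ : ∀ u ∈ Icc ρ r, κ ≤ u * g u) : κ * Real.log (r / ρ) ≤ ∫ u in ρ..r, g u := by
  have hinv : IntervalIntegrable (fun u : ℝ => u⁻¹) volume ρ r :=
    intervalIntegrable_inv_iff.2 (.inr (notMem_uIcc_of_lt hρ (hρ.trans_le hρr)))
  rw [← integral_inv_of_pos hρ (hρ.trans_le hρr), ← intervalIntegral.integral_const_mul]
  refine intervalIntegral.integral_mono_on hρr (hinv.const_mul κ)
    ((intervalIntegrable_iff_integrableOn_Icc_of_le hρr).2 hg) fun u hu => ?_
  rw [← div_eq_mul_inv, div_le_iff₀' (hρ.trans_le hu.1)]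
  exact hκ u hu

lemma eventually_mul_log_div_le_integral (hg : AEMeasurable g (volume.restrict (Ioi 0)))
    (hgκ : Tendsto (fun u => u * g u) (𝓝[>] 0) (𝓝 κ)) (hκ' : κ' < κ) :
    ∀ᶠ r in 𝓝[>] 0, ∀ ρ ∈ Ioc 0 r, κ' * Real.log (r / ρ) ≤ ∫ u in ρ..r, g u := by
  filter_upwards [eventually_forall_integrableOn_Icc hg hgκ,
    eventually_nhdsGT_forall_mem_Ioc (hgκ.eventually_const_le hκ')] with r h_int hle ρ hρ
  exact mul_log_div_le_integral hρ.1 hρ.2 (h_int ρ hρ)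
    fun u hu => hle u ⟨hρ.1.trans_le hu.1, hu.2⟩

lemma eventually_lt_integral_of_tendsto_mul (hg : AEMeasurable g (volume.restrict (Ioi 0)))
    (hgκ : Tendsto (fun u => u * g u) (𝓝[>] 0) (𝓝 κ)) (hs : s ∈ Ioo 0 1) {a : ℝ}
    (ha : a < κ * Real.log s⁻¹) : ∀ᶠ r in 𝓝[>] 0, a < ∫ u in r * s..r, g u := by
  have hlog : 0 < Real.log s⁻¹ := Real.log_pos ((one_lt_inv₀ hs.1).2 hs.2)
  obtain ⟨κ', haκ', hκ'⟩ := exists_between ((div_lt_iff₀ hlog).2 ha)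
  filter_upwards [eventually_mul_log_div_le_integral hg hgκ hκ', self_mem_nhdsWithin]
    with r hle (hr : 0 < r)
  have hbound := hle (r * s) ⟨mul_pos hr hs.1, mul_le_of_le_one_right hr.le hs.2.le⟩
  rw [div_mul_cancel_left₀ hr.ne'] at hbound
  exact ((div_lt_iff₀ hlog).1 haκ').trans_le hbound

lemma tendsto_integral_of_tendsto_mul (hg : AEMeasurable g (volume.restrict (Ioi 0)))
    (hgκ : Tendsto (fun u => u * g u) (𝓝[>] 0) (𝓝 κ)) (hs : s ∈ Ioo 0 1) :
    Tendsto (fun r => ∫ u in r * s..r, g u) (𝓝[>] 0) (𝓝 (κ * Real.log s⁻¹)) := by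
  refine tendsto_order.2
    ⟨fun a ha => eventually_lt_integral_of_tendsto_mul hg hgκ hs ha, fun a ha => ?_⟩
  have hneg : Tendsto (fun u => u * (-g) u) (𝓝[>] 0) (𝓝 (-κ)) := by
    simpa only [Pi.neg_apply, mul_neg] using hgκ.neg
  filter_upwards [eventually_lt_integral_of_tendsto_mul (a := -a) hg.neg hneg hs (by linarith)]
    with r hr
  simpa only [Pi.neg_apply, intervalIntegral.integral_neg, neg_lt_neg_iff] using hr

lemma tendsto_integratingFactor_mul_left (hg : AEMeasurable g (volume.restrict (Ioi 0)))
    (hgκ : Tendsto (fun u => u * g u) (𝓝[>] 0) (𝓝 κ)) (hs : s ∈ Ioo 0 1) :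
    Tendsto (fun r => integratingFactor g (r * s) r) (𝓝[>] 0) (𝓝 (s ^ κ)) := by
  have hlimit : s ^ κ = Real.exp (-(κ * Real.log s⁻¹)) := by
    rw [Real.log_inv, Real.rpow_def_of_pos hs.1]
    ring_nf
  rw [hlimit]
  exact (Real.continuous_exp.tendsto _).comp (tendsto_integral_of_tendsto_mul hg hgκ hs).neg

lemma eventually_integratingFactor_le_div_rpow (hg : AEMeasurable g (volume.restrict (Ioi 0)))
    (hgκ : Tendsto (fun u => u * g u) (𝓝[>] 0) (𝓝 κ)) (hκ' : κ' < κ) :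
    ∀ᶠ r in 𝓝[>] 0, ∀ ρ ∈ Ioc 0 r, integratingFactor g ρ r ≤ (ρ / r) ^ κ' := by
  filter_upwards [eventually_mul_log_div_le_integral hg hgκ hκ'] with r hle ρ hρ
  rw [integratingFactor, Real.rpow_def_of_pos (div_pos hρ.1 (hρ.1.trans_le hρ.2)),
    Real.exp_le_exp, ← inv_div r ρ, Real.log_inv]
  linarith [hle ρ hρ]

lemma eventually_norm_duhamelIntegrand_le (hg : AEMeasurable g (volume.restrict (Ioi 0)))
    (hgκ : Tendsto (fun u => u * g u) (𝓝[>] 0) (𝓝 κ))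
    (hfL : Tendsto (fun ρ => f ρ / ρ ^ (p - 1)) (𝓝[>] 0) (𝓝 L)) (hκ' : κ' < κ) :
    ∀ᶠ r in 𝓝[>] 0, ∀ ρ ∈ Ioc 0 r,
      ‖duhamelIntegrand g f r ρ‖ ≤ (|L| + 1) * ρ ^ (p - 1) * (ρ / r) ^ κ' := by
  filter_upwards [eventually_abs_le_abs_add_one hfL,
    eventually_integratingFactor_le_div_rpow hg hgκ hκ'] with r hf hexp ρ hρ
  have hpow : 0 < ρ ^ (p - 1) := Real.rpow_pos_of_pos hρ.1 _
  have hfρ : |f ρ| ≤ (|L| + 1) * ρ ^ (p - 1) := by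
    simpa only [abs_div, abs_of_pos hpow, div_le_iff₀ hpow] using hf ρ hρ
  rw [duhamelIntegrand, norm_mul, Real.norm_eq_abs, Real.norm_eq_abs, integratingFactor,
    Real.abs_exp]
  exact mul_le_mul hfρ (hexp ρ hρ) (Real.exp_pos _).le (by positivity)

theorem eventually_intervalIntegrable_duhamelIntegrand
    (hf : AEMeasurable f (volume.restrict (Ioi 0))) (hg : AEMeasurable g (volume.restrict (Ioi 0)))
    (hgκ : Tendsto (fun u => u * g u) (𝓝[>] 0) (𝓝 κ))
    (hfL : Tendsto (fun ρ => f ρ / ρ ^ (p - 1)) (𝓝[>] 0) (𝓝 L)) (hpκ : 0 < p + κ) :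
    ∀ᶠ r in 𝓝[>] 0, IntervalIntegrable (duhamelIntegrand g f r) volume 0 r := by
  obtain ⟨κ', hpκ', hκ'⟩ := exists_between (neg_lt_iff_pos_add'.2 hpκ)
  filter_upwards [eventually_norm_duhamelIntegrand_le hg hgκ hfL hκ',
    eventually_forall_integrableOn_Icc hg hgκ, self_mem_nhdsWithin] with r hbound h_int (hr : 0 < r)
  have hmeas : AEStronglyMeasurable (duhamelIntegrand g f r) (volume.restrict (Ioc 0 r)) :=
    (hf.mono_set Ioc_subset_Ioi_self).aestronglyMeasurable.mul
      ((continuousOn_integratingFactor h_int).aestronglyMeasurable measurableSet_Ioc)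
  have hpow : IntervalIntegrable (fun ρ => (|L| + 1) * r ^ (-κ') * ρ ^ (p - 1 + κ')) volume 0 r :=
    (intervalIntegral.intervalIntegrable_rpow' (by linarith)).const_mul _
  refine hpow.mono_fun' (by rwa [uIoc_of_le hr.le]) ?_
  rw [uIoc_of_le hr.le]
  filter_upwards [ae_restrict_mem measurableSet_Ioc] with ρ hρ
  refine (hbound ρ hρ).trans_eq ?_
  rw [Real.div_rpow hρ.1.le hr.le, Real.rpow_add hρ.1, Real.rpow_neg hr.le]
  ring

lemma integral_duhamelIntegrand_div_rpow (hr : 0 < r) :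
    (∫ ρ in 0..r, duhamelIntegrand g f r ρ) / r ^ p =
      ∫ s in 0..1, r ^ (1 - p) * duhamelIntegrand g f r (r * s) := by
  have hscale := intervalIntegral.mul_integral_comp_mul_left (a := 0) (b := 1) (c := r)
    (f := duhamelIntegrand g f r)
  rw [mul_zero, mul_one] at hscale
  rw [← hscale, intervalIntegral.integral_const_mul, Real.rpow_sub hr, Real.rpow_one]
  ring

lemma intervalIntegrable_duhamelIntegrand_mul_left (hr : 0 < r)
    (h_int : IntervalIntegrable (duhamelIntegrand g f r) volume 0 r) :
    IntervalIntegrable (fun s => duhamelIntegrand g f r (r * s)) volume 0 1 := by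
  simpa only [zero_div, div_self hr.ne'] using h_int.comp_mul_left (c := r)

lemma tendsto_duhamelIntegrand_mul_left (hg : AEMeasurable g (volume.restrict (Ioi 0)))
    (hgκ : Tendsto (fun u => u * g u) (𝓝[>] 0) (𝓝 κ))
    (hfL : Tendsto (fun ρ => f ρ / ρ ^ (p - 1)) (𝓝[>] 0) (𝓝 L)) (hs : s ∈ Ioo 0 1) :
    Tendsto (fun r => r ^ (1 - p) * duhamelIntegrand g f r (r * s)) (𝓝[>] 0)
      (𝓝 (L * s ^ (p - 1 + κ))) := by
  have hrs : Tendsto (fun r => r * s) (𝓝[>] 0) (𝓝[>] 0) := by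
    simpa only [zero_mul, id_eq] using
      TendstoNhdsWithinIoi.mul_const hs.1 (tendsto_id (x := 𝓝[>] (0 : ℝ)))
  rw [Real.rpow_add hs.1, ← mul_assoc]
  refine (((hfL.comp hrs).mul_const (s ^ (p - 1))).mul
    (tendsto_integratingFactor_mul_left hg hgκ hs)).congr' ?_
  filter_upwards [self_mem_nhdsWithin] with r (hr : 0 < r)
  have hsp := (Real.rpow_pos_of_pos hs.1 (p - 1)).ne'
  rw [Function.comp_apply, duhamelIntegrand, Real.mul_rpow hr.le hs.1.le, ← neg_sub p 1,
    Real.rpow_neg hr.le]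
  field_simp

lemma eventually_norm_duhamelIntegrand_mul_left_le
    (hg : AEMeasurable g (volume.restrict (Ioi 0)))
    (hgκ : Tendsto (fun u => u * g u) (𝓝[>] 0) (𝓝 κ))
    (hfL : Tendsto (fun ρ => f ρ / ρ ^ (p - 1)) (𝓝[>] 0) (𝓝 L)) (hκ' : κ' < κ) :
    ∀ᶠ r in 𝓝[>] 0, ∀ s ∈ Ioc (0 : ℝ) 1,
      ‖r ^ (1 - p) * duhamelIntegrand g f r (r * s)‖ ≤ (|L| + 1) * s ^ (p - 1 + κ') := by
  filter_upwards [eventually_norm_duhamelIntegrand_le hg hgκ hfL hκ', self_mem_nhdsWithin]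
    with r hbound (hr : 0 < r) s hs
  have hrp : 0 < r ^ (p - 1) := Real.rpow_pos_of_pos hr _
  rw [norm_mul, ← neg_sub p 1, Real.rpow_neg hr.le, norm_inv, Real.norm_of_nonneg hrp.le,
    inv_mul_le_iff₀ hrp]
  refine (hbound (r * s) ⟨mul_pos hr hs.1, mul_le_of_le_one_right hr.le hs.2⟩).trans_eq ?_
  rw [mul_div_cancel_left₀ _ hr.ne', Real.mul_rpow hr.le hs.1.le, Real.rpow_add hs.1]
  ring

theorem tendsto_integral_duhamelIntegrand_div_rpow
    (hf : AEMeasurable f (volume.restrict (Ioi 0))) (hg : AEMeasurable g (volume.restrict (Ioi 0)))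
    (hgκ : Tendsto (fun u => u * g u) (𝓝[>] 0) (𝓝 κ))
    (hfL : Tendsto (fun ρ => f ρ / ρ ^ (p - 1)) (𝓝[>] 0) (𝓝 L)) (hpκ : 0 < p + κ) :
    Tendsto (fun r => (∫ ρ in 0..r, duhamelIntegrand g f r ρ) / r ^ p) (𝓝[>] 0)
      (𝓝 (L / (p + κ))) := by
  obtain ⟨κ', hpκ', hκ'⟩ := exists_between (neg_lt_iff_pos_add'.2 hpκ)
  have hlimit : ∫ s in (0 : ℝ)..1, L * s ^ (p - 1 + κ) = L / (p + κ) := by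
    have hexp : p - 1 + κ + 1 = p + κ := by ring
    rw [intervalIntegral.integral_const_mul, integral_rpow (.inl (by linarith)), hexp,
      Real.one_rpow, Real.zero_rpow hpκ.ne', sub_zero, mul_one_div]
  rw [← hlimit]
  refine (intervalIntegral.tendsto_integral_filter_of_dominated_convergence
    (F := fun r s => r ^ (1 - p) * duhamelIntegrand g f r (r * s))
    (fun s => (|L| + 1) * s ^ (p - 1 + κ')) ?_ ?_ ?_ ?_).congr' ?_
  · filter_upwards [eventually_intervalIntegrable_duhamelIntegrand hf hg hgκ hfL hpκ,
      self_mem_nhdsWithin] with r h_int hr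
    have hscaled := intervalIntegrable_duhamelIntegrand_mul_left hr h_int
    exact (hscaled.const_mul _).def'.aestronglyMeasurable
  · filter_upwards [eventually_norm_duhamelIntegrand_mul_left_le hg hgκ hfL hκ'] with r hbound
    exact Eventually.of_forall fun s hs => hbound s (uIoc_of_le (zero_le_one' ℝ) ▸ hs)
  · exact (intervalIntegral.intervalIntegrable_rpow' (by linarith)).const_mul _
  · filter_upwards [compl_mem_ae_iff.2 (measure_singleton (1 : ℝ))] with s hs₁ hs
    rw [uIoc_of_le zero_le_one] at hs
    exact tendsto_duhamelIntegrand_mul_left hg hgκ hfL ⟨hs.1, lt_of_le_of_ne hs.2 hs₁⟩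
  · filter_upwards [self_mem_nhdsWithin] with r hr
    exact (integral_duhamelIntegrand_div_rpow hr).symm

end Duhamel

section Coefficients

open scoped Topology

variable {q β δ ℓ : ℝ} {bL bN : ℝ → ℝ}

lemma tendsto_rpow_neg_div_div_rpow (hℓ : ℓ ≠ 0)
    (hbL : Tendsto (fun r => bL r / r ^ q) (𝓝[>] 0) (𝓝 ℓ)) :
    Tendsto (fun r => r ^ (-δ) / bL r / r ^ (-δ - q)) (𝓝[>] 0) (𝓝 ℓ⁻¹) := by
  refine (hbL.inv₀ hℓ).congr' ?_
  filter_upwards [self_mem_nhdsWithin] with r (hr : 0 < r)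
  have hδ := (Real.rpow_pos_of_pos hr (-δ)).ne'
  rw [Real.rpow_sub hr, inv_div, div_div_div_comm, div_self hδ, one_div_div]

lemma tendsto_mul_div_mul_self (hℓ : ℓ ≠ 0)
    (hbL : Tendsto (fun r => bL r / r ^ q) (𝓝[>] 0) (𝓝 ℓ))
    (hbN : Tendsto (fun r => bN r / r ^ q) (𝓝[>] 0) (𝓝 β)) :
    Tendsto (fun r => r * (bN r / (bL r * r))) (𝓝[>] 0) (𝓝 (β / ℓ)) := by
  refine (hbN.div hbL hℓ).congr' ?_
  filter_upwards [self_mem_nhdsWithin] with r (hr : 0 < r)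
  rw [Pi.div_apply, div_div_div_cancel_right₀ (Real.rpow_pos_of_pos hr q).ne']
  field_simp

end Coefficients

theorem change_of_variables_asymptotics_general (c α β δ ℓ : ℝ) (hℓ : ℓ ≠ 0)
    (hD : 0 < c * (β / ℓ) + 1 - 2 * α - δ)
    (bL bN : ℝ → ℝ)
    (hbLmeas : AEMeasurable bL (volume.restrict (Ioi 0)))
    (hbNmeas : AEMeasurable bN (volume.restrict (Ioi 0)))
    (hbLlim : Tendsto (fun r : ℝ => bL r / r ^ (2 * α)) (nhdsWithin 0 (Ioi 0)) (nhds ℓ))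
    (hbNlim : Tendsto (fun r : ℝ => bN r / r ^ (2 * α)) (nhdsWithin 0 (Ioi 0)) (nhds β)) :
    ∃ r₀ : ℝ, 0 < r₀ ∧
      (∀ r ∈ Ioo (0 : ℝ) r₀,
        IntegrableOn
          (fun ρ => ρ ^ (-δ) / bL ρ * Real.exp (-c * ∫ u in ρ..r, bN u / (bL u * u)))
          (Ioo 0 r)) ∧
      Tendsto
        (fun r : ℝ =>
          (∫ ρ in Ioo (0 : ℝ) r,
            ρ ^ (-δ) / bL ρ * Real.exp (-c * ∫ u in ρ..r, bN u / (bL u * u))) /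
            r ^ (1 - 2 * α - δ))
        (nhdsWithin 0 (Ioi 0))
        (nhds (ℓ⁻¹ / (c * (β / ℓ) + 1 - 2 * α - δ))) := by
  set f : ℝ → ℝ := fun ρ => ρ ^ (-δ) / bL ρ
  set g : ℝ → ℝ := fun u => c * (bN u / (bL u * u))
  have hf : AEMeasurable f (volume.restrict (Ioi 0)) :=
    (measurable_id.pow_const (-δ)).aemeasurable.div hbLmeas
  have hg : AEMeasurable g (volume.restrict (Ioi 0)) :=
    (hbNmeas.div (hbLmeas.mul aemeasurable_id)).const_mul c
  have hfL :
      Tendsto (fun ρ => f ρ / ρ ^ (1 - 2 * α - δ - 1)) (nhdsWithin 0 (Ioi 0)) (nhds ℓ⁻¹) := by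
    convert tendsto_rpow_neg_div_div_rpow (δ := δ) hℓ hbLlim using 4
    ring
  have hgκ : Tendsto (fun u => u * g u) (nhdsWithin 0 (Ioi 0)) (nhds (c * (β / ℓ))) :=
    ((tendsto_mul_div_mul_self hℓ hbLlim hbNlim).const_mul c).congr fun u => mul_left_comm c u _
  have hexponent : 1 - 2 * α - δ + c * (β / ℓ) = c * (β / ℓ) + 1 - 2 * α - δ := by ring
  have hintegrand : ∀ r, duhamelIntegrand g f r =
      fun ρ => ρ ^ (-δ) / bL ρ * Real.exp (-c * ∫ u in ρ..r, bN u / (bL u * u)) := fun r => by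
    ext ρ
    rw [duhamelIntegrand, integratingFactor, intervalIntegral.integral_const_mul, neg_mul]
  rw [← hexponent] at hD ⊢
  simp only [← hintegrand]
  obtain ⟨r₀, hr₀, h_int⟩ := mem_nhdsGT_iff_exists_Ioo_subset.1
    (eventually_intervalIntegrable_duhamelIntegrand hf hg hgκ hfL hD)
  refine ⟨r₀, hr₀, fun r hr =>
    (intervalIntegrable_iff_integrableOn_Ioo_of_le hr.1.le).1 (h_int hr), ?_⟩
  refine (tendsto_integral_duhamelIntegrand_div_rpow hf hg hgκ hfL hD).congr' ?_
  filter_upwards [self_mem_nhdsWithin] with r (hr : 0 < r)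
  rw [intervalIntegral.integral_of_le hr.le, integral_Ioc_eq_integral_Ioo]

/-- Asymptotics of the derivative of the change of variables used in the proof of anomalous
regularization: with `b_L(r) ∼ r^{2α}`, `b_N(r) ∼ β r^{2α}` at the origin and
`D = (d−1)β + 1 − 2α − δ > 0`, the function
`Φ(r) = ∫₀^r (ρ^{−δ}/b_L(ρ)) exp(−(d−1)∫_ρ^r b_N(u)/(b_L(u)u) du) dρ`
is finite for small `r > 0` and `Φ(r)/r^{1−2α−δ} → 1/D` as `r → 0⁺`. -/
theorem change_of_variables_asymptotics (d : ℕ) (hd : 1 ≤ d) (α β δ : ℝ)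
    (hα : α ∈ Ioo (0:ℝ) 1) (hδ : 0 < δ)
    (hD : 0 < ((d:ℝ) - 1) * β + 1 - 2*α - δ)
    (bL bN : ℝ → ℝ)
    (hbLcont : ContinuousOn bL (Ioi 0)) (hbNcont : ContinuousOn bN (Ioi 0))
    (hbLpos : ∀ r, 0 < r → 0 < bL r)
    (hbLlim : Tendsto (fun r : ℝ => bL r / r ^ (2*α)) (nhdsWithin 0 (Ioi 0)) (nhds 1))
    (hbNlim : Tendsto (fun r : ℝ => bN r / r ^ (2*α)) (nhdsWithin 0 (Ioi 0)) (nhds β)) :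
    ∃ r₀ : ℝ, 0 < r₀ ∧
      (∀ r ∈ Ioo (0:ℝ) r₀,
        IntegrableOn
          (fun ρ => ρ ^ (-δ) / bL ρ *
            Real.exp (-((d:ℝ) - 1) * ∫ u in ρ..r, bN u / (bL u * u)))
          (Ioo 0 r)) ∧
      Tendsto
        (fun r : ℝ =>
          (∫ ρ in Ioo (0:ℝ) r,
            ρ ^ (-δ) / bL ρ *
              Real.exp (-((d:ℝ) - 1) * ∫ u in ρ..r, bN u / (bL u * u))) /
            r ^ (1 - 2*α - δ))
        (nhdsWithin 0 (Ioi 0))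
        (nhds (1 / (((d:ℝ) - 1) * β + 1 - 2*α - δ))) := by
  simpa only [inv_one, div_one] using change_of_variables_asymptotics_general ((d : ℝ) - 1) α β δ 1
    one_ne_zero (by rwa [div_one]) bL bN (hbLcont.aemeasurable measurableSet_Ioi)
    (hbNcont.aemeasurable measurableSet_Ioi) hbLlim hbNlim
end

section
/- Let d ≥ 1, let (Ω,P) be a probability space and f : Ω × ℝ^d → ℝ jointly measurable with E[∫_{ℝ^d} f(ω,x)² dx] < ∞; let F(z) := E[∫_{ℝ^d} f(ω,x+z) f(ω,x) dx] be its two-point self-correlation function. Let s ∈ (0,1], l > 0 and suppose M := sup_{0<|z|<l} |F(z)−F(0)| / |z|^{2s} < ∞. Then for every δ ∈ (0,s) there is a constant C depending only on d, s, δ and l such that E[ ∫_{ℝ^d} ∫_{ℝ^d} |f(ω,x+z) − f(ω,x)|² / |z|^{d+2(s−δ)} dz dx ] ≤ C ( M + E[∫_{ℝ^d} f(ω,x)² dx] ). -/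
open MeasureTheory
open scoped ENNReal

/-!
The weight `‖z‖ ^ (-(d + 2(s - δ)))` is too singular to be integrable at the origin, but the mean
square of the increment `f(·, x + z) - f(·, x)` compensates. By translation invariance it equals
`2 (F(0) - F(z))`, which is at most `2 M ‖z‖ ^ (2s)` near the origin, leaving the integrable
singularity `‖z‖ ^ (2δ - d)`. Away from the origin the increment is bounded in mean square by
`4 E[‖f‖²]`, and the weight is integrable at infinity because `δ < s`.
-/

open Module Metric
open scoped RealInnerProductSpace

section RadialWeights

variable {E : Type*} [NormedAddCommGroup E] [NormedSpace ℝ E] [FiniteDimensional ℝ E]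
  [MeasurableSpace E] [BorelSpace E] (μ : Measure E) [μ.IsAddHaarMeasure] {l r : ℝ}

lemma setLIntegral_ball_norm_rpow_lt_top [Nontrivial E] (hr : -(finrank ℝ E : ℝ) < r) :
    ∫⁻ z in ball 0 l, ENNReal.ofReal (‖z‖ ^ r) ∂μ < ⊤ := by
  have h_int : IntegrableOn (fun z : E ↦ ‖z‖ ^ r) (ball 0 l) μ := by
    refine integrableOn_ball_of_norm_le_rpow (C := 1) (α := -r) finrank_pos (by linarith)
      (ae_of_all _ fun z ↦ ?_)
      (by fun_prop : Measurable _).aestronglyMeasurable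
    rw [Real.norm_of_nonneg (by positivity), neg_neg, one_mul]
  exact h_int.lintegral_lt_top

lemma setLIntegral_compl_ball_norm_rpow_neg_lt_top (hl : 0 < l) (hr : (finrank ℝ E : ℝ) < r) :
    ∫⁻ z in (ball 0 l)ᶜ, ENNReal.ofReal (‖z‖ ^ (-r)) ∂μ < ⊤ := by
  have h_bound : ∀ z ∈ (ball (0 : E) l)ᶜ, ‖z‖ ^ (-r) ≤ (1 + l⁻¹) ^ r * (1 + ‖z‖) ^ (-r) := by
    intro z hz
    have hlz : l ≤ ‖z‖ := by simpa using hz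
    have hz0 : 0 < ‖z‖ := hl.trans_le hlz
    have h_base : 1 + ‖z‖ ≤ (1 + l⁻¹) * ‖z‖ := by
      have : 1 ≤ l⁻¹ * ‖z‖ := by rwa [inv_mul_eq_div, one_le_div hl]
      linarith
    have hr0 : 0 ≤ r := (Nat.cast_nonneg _).trans hr.le
    rw [Real.rpow_neg hz0.le, Real.rpow_neg (by positivity), ← div_eq_mul_inv,
      le_div_iff₀ (by positivity), inv_mul_le_iff₀ (by positivity), mul_comm,
      ← Real.mul_rpow (by positivity) hz0.le]
    gcongr
  calc ∫⁻ z in (ball 0 l)ᶜ, ENNReal.ofReal (‖z‖ ^ (-r)) ∂μ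
      ≤ ∫⁻ z in (ball 0 l)ᶜ, ENNReal.ofReal ((1 + l⁻¹) ^ r * (1 + ‖z‖) ^ (-r)) ∂μ :=
        setLIntegral_mono' measurableSet_ball.compl fun z hz ↦
          ENNReal.ofReal_le_ofReal (h_bound z hz)
    _ < ⊤ := ((integrable_one_add_norm hr).const_mul _).integrableOn.lintegral_lt_top

lemma exists_lintegral_mul_norm_rpow_neg_le [Nontrivial E] {t : ℝ} (hl : 0 < l)
    (hr : (finrank ℝ E : ℝ) < r) (hrt : r < finrank ℝ E + t) :
    ∃ C : ℝ, 0 < C ∧ ∀ (D : E → ℝ≥0∞) (A B : ℝ≥0∞),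
      (∀ z, 0 < ‖z‖ → ‖z‖ < l → D z ≤ A * ENNReal.ofReal (‖z‖ ^ t)) → (∀ z, D z ≤ B) →
      ∫⁻ z, D z * ENNReal.ofReal (‖z‖ ^ (-r)) ∂μ ≤ ENNReal.ofReal C * (A + B) := by
  set K := ∫⁻ z in ball 0 l, ENNReal.ofReal (‖z‖ ^ (t - r)) ∂μ
  set N := ∫⁻ z in (ball 0 l)ᶜ, ENNReal.ofReal (‖z‖ ^ (-r)) ∂μ
  have hKN : K + N < ⊤ := ENNReal.add_lt_top.2
    ⟨setLIntegral_ball_norm_rpow_lt_top μ (by linarith),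
      setLIntegral_compl_ball_norm_rpow_neg_lt_top μ hl hr⟩
  obtain ⟨C, -, hC, -⟩ := ENNReal.lt_iff_exists_real_btwn.1 hKN
  refine ⟨C, ENNReal.ofReal_pos.1 (bot_le.trans_lt hC), fun D A B h_near h_far ↦ ?_⟩
  have h_ball : ∫⁻ z in ball 0 l, D z * ENNReal.ofReal (‖z‖ ^ (-r)) ∂μ ≤ A * K := by
    rw [← lintegral_const_mul _ (by fun_prop)]
    refine setLIntegral_mono' measurableSet_ball fun z hz ↦ ?_
    rcases (norm_nonneg z).eq_or_lt with hz0 | hz0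
    · have hr0 : -r ≠ 0 := by linarith [(Nat.cast_nonneg _ : (0 : ℝ) ≤ finrank ℝ E)]
      simp [← hz0, Real.zero_rpow hr0]
    · rw [sub_eq_add_neg, Real.rpow_add hz0, ENNReal.ofReal_mul (by positivity), ← mul_assoc]
      gcongr
      exact h_near z hz0 (mem_ball_zero_iff.1 hz)
  have h_compl : ∫⁻ z in (ball 0 l)ᶜ, D z * ENNReal.ofReal (‖z‖ ^ (-r)) ∂μ ≤ B * N := by
    rw [← lintegral_const_mul _ (by fun_prop)]
    gcongr with z
    exact h_far z
  calc ∫⁻ z, D z * ENNReal.ofReal (‖z‖ ^ (-r)) ∂μ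
      ≤ A * K + B * N := by
        rw [← lintegral_add_compl _ (measurableSet_ball (x := (0 : E)) (ε := l))]
        exact add_le_add h_ball h_compl
    _ ≤ A * (K + N) + B * (K + N) := by gcongr <;> simp
    _ = (K + N) * (A + B) := by ring
    _ ≤ ENNReal.ofReal C * (A + B) := by gcongr

end RadialWeights

section SquareIntegrable

variable {X G : Type*} [MeasurableSpace X] [NormedAddCommGroup G] {ν : Measure X} {T : X → X}

lemma eLpNorm_comp_sub_self_le {f : X → G} {p : ℝ≥0∞}
    (hT : MeasurePreserving T ν ν) (hf : AEStronglyMeasurable f ν) (hp : 1 ≤ p) :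
    eLpNorm (f ∘ T - f) p ν ≤ 2 * eLpNorm f p ν :=
  calc eLpNorm (f ∘ T - f) p ν
      ≤ eLpNorm (f ∘ T) p ν + eLpNorm f p ν :=
        eLpNorm_sub_le (hf.comp_measurePreserving hT) hf hp
    _ = 2 * eLpNorm f p ν := by rw [eLpNorm_comp_measurePreserving hf hT, two_mul]

lemma eLpNorm_two_sq (f : X → G) :
    eLpNorm f 2 ν ^ 2 = ∫⁻ p, ENNReal.ofReal (‖f p‖ ^ 2) ∂ν := by
  simpa [ENNReal.ofReal_pow] using eLpNorm_nnreal_pow_eq_lintegral (f := f) (μ := ν) two_ne_zero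

variable {Y : Type*} [MeasurableSpace Y] {μ : Measure Y} [SFinite μ]

lemma eLpNorm_two_sq_prod {f : X × Y → G} (hf : AEStronglyMeasurable f (ν.prod μ)) :
    eLpNorm f 2 (ν.prod μ) ^ 2 = ∫⁻ x, ∫⁻ y, ENNReal.ofReal (‖f (x, y)‖ ^ 2) ∂μ ∂ν :=
  (eLpNorm_two_sq f).trans (lintegral_prod _ (hf.norm.pow 2).aemeasurable.ennreal_ofReal)

lemma memLp_two_prod_iff {f : X × Y → G} (hf : AEStronglyMeasurable f (ν.prod μ)) :
    MemLp f 2 (ν.prod μ) ↔ ∫⁻ x, ∫⁻ y, ENNReal.ofReal (‖f (x, y)‖ ^ 2) ∂μ ∂ν < ⊤ := by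
  rw [← eLpNorm_two_sq_prod hf]
  simp [MemLp, hf]

variable {H : Type*} [NormedAddCommGroup H] [InnerProductSpace ℝ H] {f g : X → H}

lemma integrable_inner_of_memLp_two (hf : MemLp f 2 ν) (hg : MemLp g 2 ν) :
    Integrable (fun p ↦ ⟪f p, g p⟫) ν :=
  (hf.norm.integrable_mul hg.norm).mono' (hf.1.inner hg.1)
    (ae_of_all _ fun _ ↦ norm_inner_le_norm _ _)

lemma integral_norm_sub_sq (hf : MemLp f 2 ν) (hg : MemLp g 2 ν) :
    ∫ p, ‖f p - g p‖ ^ 2 ∂ν =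
      ∫ p, ‖f p‖ ^ 2 ∂ν - 2 * ∫ p, ⟪f p, g p⟫ ∂ν + ∫ p, ‖g p‖ ^ 2 ∂ν := by
  have hf_sq : Integrable (fun p ↦ ‖f p‖ ^ 2) ν := (memLp_two_iff_integrable_sq_norm hf.1).1 hf
  have hg_sq : Integrable (fun p ↦ ‖g p‖ ^ 2) ν := (memLp_two_iff_integrable_sq_norm hg.1).1 hg
  have h_inner : Integrable (fun p ↦ 2 * ⟪f p, g p⟫) ν :=
    (integrable_inner_of_memLp_two hf hg).const_mul 2
  simp_rw [norm_sub_sq_real]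
  have h_diff : Integrable (fun p ↦ ‖f p‖ ^ 2 - 2 * ⟪f p, g p⟫) ν := hf_sq.sub h_inner
  rw [integral_add h_diff hg_sq, integral_sub hf_sq h_inner, integral_const_mul]

lemma eLpNorm_comp_sub_self_two_sq (hT : MeasurePreserving T ν ν) (hf : MemLp f 2 ν) :
    eLpNorm (f ∘ T - f) 2 ν ^ 2 =
      ENNReal.ofReal (2 * (∫ p, ⟪f p, f p⟫ ∂ν - ∫ p, ⟪f (T p), f p⟫ ∂ν)) := by
  have hfT : MemLp (f ∘ T) 2 ν := hf.comp_measurePreserving hT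
  have h_shift : ∫ p, ‖f (T p)‖ ^ 2 ∂ν = ∫ p, ‖f p‖ ^ 2 ∂ν := by
    conv_rhs => rw [← hT.map_eq]
    exact (integral_map hT.aemeasurable (by rw [hT.map_eq]; exact hf.1.norm.pow 2)).symm
  have h_sq : Integrable (fun p ↦ ‖(f ∘ T - f) p‖ ^ 2) ν :=
    (memLp_two_iff_integrable_sq_norm (hfT.sub hf).1).1 (hfT.sub hf)
  rw [eLpNorm_two_sq, ← ofReal_integral_eq_lintegral_ofReal h_sq (ae_of_all _ fun _ ↦ sq_nonneg _)]
  congr 1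
  calc ∫ p, ‖(f ∘ T - f) p‖ ^ 2 ∂ν
      = ∫ p, ‖f (T p)‖ ^ 2 ∂ν - 2 * ∫ p, ⟪f (T p), f p⟫ ∂ν + ∫ p, ‖f p‖ ^ 2 ∂ν :=
        integral_norm_sub_sq hfT hf
    _ = 2 * (∫ p, ⟪f p, f p⟫ ∂ν - ∫ p, ⟪f (T p), f p⟫ ∂ν) := by
        simp_rw [h_shift, real_inner_self_eq_norm_sq]
        ring

end SquareIntegrable

section RandomField

/-- The translation of `Ω × E` by `z` in the space variable; the increments of a random field `f`
are `f ∘ spatialShift z - f`. -/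
def spatialShift {Ω E : Type*} [Add E] (z : E) (p : Ω × E) : Ω × E := (p.1, p.2 + z)

variable {Ω E H : Type*} [MeasurableSpace Ω] (P : Measure Ω) [NormedAddCommGroup E]
  [MeasurableSpace E] (μ : Measure E) [NormedAddCommGroup H]

/-- The two-point self-correlation function `F(z) = E[∫ ⟪f(·, x + z), f(·, x)⟫ dx]` of a random
field `f` on `E`, the random parameter being the first coordinate of the argument of `f`. -/
noncomputable def selfCorrelation [InnerProductSpace ℝ H] (f : Ω × E → H) (z : E) : ℝ :=
  ∫ ω, ∫ x, ⟪f (ω, x + z), f (ω, x)⟫ ∂μ ∂P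

lemma selfCorrelation_real (f : Ω × E → ℝ) (z : E) :
    selfCorrelation P μ f z = ∫ ω, ∫ x, f (ω, x + z) * f (ω, x) ∂μ ∂P := by
  simp only [selfCorrelation, Real.inner_apply]

/-- The expected squared Gagliardo seminorm `E[[f]²]` of order `σ` of a random field `f` on `E`,
written in terms of the displacement `z` between the two points. The integrand is `0` at `z = 0`. -/
noncomputable def meanGagliardoSq [NormedSpace ℝ E] (σ : ℝ) (f : Ω × E → H) : ℝ≥0∞ :=
  ∫⁻ ω, ∫⁻ x, ∫⁻ z,
    ENNReal.ofReal (‖f (ω, x + z) - f (ω, x)‖ ^ 2 / ‖z‖ ^ ((finrank ℝ E : ℝ) + 2 * σ)) ∂μ ∂μ ∂P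

variable {P μ} [SFinite P] [SFinite μ] [BorelSpace E] [μ.IsAddRightInvariant]

lemma measurePreserving_spatialShift (z : E) :
    MeasurePreserving (spatialShift z) (P.prod μ) (P.prod μ) :=
  (MeasurePreserving.id P).prod (measurePreserving_add_right μ z)

lemma selfCorrelation_eq_integral_prod [InnerProductSpace ℝ H] {f : Ω × E → H}
    (hf : MemLp f 2 (P.prod μ)) (z : E) :
    selfCorrelation P μ f z = ∫ p, ⟪f (spatialShift z p), f p⟫ ∂P.prod μ :=
  (integral_prod _ (integrable_inner_of_memLp_two
    (hf.comp_measurePreserving (measurePreserving_spatialShift z)) hf)).symm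

lemma eLpNorm_spatialShift_sub_self_sq [InnerProductSpace ℝ H] {f : Ω × E → H}
    (hf : MemLp f 2 (P.prod μ)) (z : E) :
    eLpNorm (f ∘ spatialShift z - f) 2 (P.prod μ) ^ 2 =
      ENNReal.ofReal (2 * (selfCorrelation P μ f 0 - selfCorrelation P μ f z)) := by
  rw [eLpNorm_comp_sub_self_two_sq (measurePreserving_spatialShift z) hf,
    selfCorrelation_eq_integral_prod hf, selfCorrelation_eq_integral_prod hf]
  simp only [spatialShift, add_zero]

variable [SecondCountableTopology E]

lemma quasiMeasurePreserving_spatialShift :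
    Measure.QuasiMeasurePreserving (fun q : (Ω × E) × E ↦ spatialShift q.2 q.1)
      ((P.prod μ).prod μ) (P.prod μ) :=
  QuasiMeasurePreserving.prod_of_left (by unfold spatialShift; fun_prop)
    (ae_of_all _ fun z ↦ (measurePreserving_spatialShift z).quasiMeasurePreserving)

lemma meanGagliardoSq_eq_lintegral_eLpNorm_sq [NormedSpace ℝ E] {f : Ω × E → H}
    (hf : AEStronglyMeasurable f (P.prod μ)) (σ : ℝ) :
    meanGagliardoSq P μ σ f = ∫⁻ z, eLpNorm (f ∘ spatialShift z - f) 2 (P.prod μ) ^ 2 *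
      ENNReal.ofReal (‖z‖ ^ (-((finrank ℝ E : ℝ) + 2 * σ))) ∂μ := by
  set k : E → ℝ := fun z ↦ ‖z‖ ^ (-((finrank ℝ E : ℝ) + 2 * σ))
  have h_meas : AEMeasurable (fun q : (Ω × E) × E ↦
      ENNReal.ofReal (‖f (spatialShift q.2 q.1) - f q.1‖ ^ 2 * k q.2)) ((P.prod μ).prod μ) := by
    have h_incr : AEStronglyMeasurable
        (fun q : (Ω × E) × E ↦ f (spatialShift q.2 q.1) - f q.1) ((P.prod μ).prod μ) :=
      (hf.comp_quasiMeasurePreserving quasiMeasurePreserving_spatialShift).sub hf.comp_fst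
    exact ((h_incr.norm.pow 2).aemeasurable.mul (by fun_prop)).ennreal_ofReal
  calc meanGagliardoSq P μ σ f
      = ∫⁻ ω, ∫⁻ x, ∫⁻ z, ENNReal.ofReal (‖f (spatialShift z (ω, x)) - f (ω, x)‖ ^ 2 * k z)
          ∂μ ∂μ ∂P := by
        simp only [meanGagliardoSq, k, spatialShift, Real.rpow_neg (norm_nonneg _), div_eq_mul_inv]
    _ = ∫⁻ p, ∫⁻ z, ENNReal.ofReal (‖f (spatialShift z p) - f p‖ ^ 2 * k z) ∂μ ∂P.prod μ :=
        (lintegral_prod _ h_meas.lintegral_prod_right').symm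
    _ = ∫⁻ z, ∫⁻ p, ENNReal.ofReal (‖f (spatialShift z p) - f p‖ ^ 2 * k z) ∂P.prod μ ∂μ :=
        lintegral_lintegral_swap h_meas
    _ = ∫⁻ z, eLpNorm (f ∘ spatialShift z - f) 2 (P.prod μ) ^ 2 * ENNReal.ofReal (k z) ∂μ := by
        refine lintegral_congr fun z ↦ ?_
        simp_rw [ENNReal.ofReal_mul (sq_nonneg _)]
        rw [lintegral_mul_const' _ _ ENNReal.ofReal_ne_top, eLpNorm_two_sq]
        rfl

end RandomField

theorem selfcorrelation_to_sobolev_general {E : Type*} [NormedAddCommGroup E] [NormedSpace ℝ E]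
    [FiniteDimensional ℝ E] [Nontrivial E] [MeasurableSpace E] [BorelSpace E] (μ : Measure E)
    [μ.IsAddHaarMeasure] {s δ l : ℝ} (hδ : δ ∈ Set.Ioo 0 s) (hl : 0 < l) :
    ∃ C : ℝ, 0 < C ∧
      ∀ (Ω : Type*) [MeasurableSpace Ω] (P : Measure Ω) [SFinite P]
        (H : Type*) [NormedAddCommGroup H] [InnerProductSpace ℝ H] (f : Ω × E → H),
        MemLp f 2 (P.prod μ) →
        ∀ M : ℝ,
        (∀ z, 0 < ‖z‖ → ‖z‖ < l →
          selfCorrelation P μ f 0 - selfCorrelation P μ f z ≤ M * ‖z‖ ^ (2 * s)) →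
        meanGagliardoSq P μ (s - δ) f ≤
          ENNReal.ofReal C * (ENNReal.ofReal M + eLpNorm f 2 (P.prod μ) ^ 2) := by
  obtain ⟨hδ0, hδs⟩ := hδ
  obtain ⟨C, hC, h_weight⟩ := exists_lintegral_mul_norm_rpow_neg_le μ (t := 2 * s)
    (r := finrank ℝ E + 2 * (s - δ)) hl (by linarith) (by linarith)
  refine ⟨4 * C, by positivity, fun Ω _ P _ H _ _ f hf M hM ↦ ?_⟩
  set e := eLpNorm f 2 (P.prod μ)
  have h_near : ∀ z : E, 0 < ‖z‖ → ‖z‖ < l →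
      eLpNorm (f ∘ spatialShift z - f) 2 (P.prod μ) ^ 2 ≤
        2 * ENNReal.ofReal M * ENNReal.ofReal (‖z‖ ^ (2 * s)) := by
    intro z hz0 hzl
    rw [eLpNorm_spatialShift_sub_self_sq hf, mul_assoc, ← ENNReal.ofReal_mul' (by positivity),
      ENNReal.ofReal_mul zero_le_two, ENNReal.ofReal_ofNat]
    gcongr
    exact hM z hz0 hzl
  have h_far : ∀ z : E, eLpNorm (f ∘ spatialShift z - f) 2 (P.prod μ) ^ 2 ≤ 4 * e ^ 2 := by
    intro z
    calc eLpNorm (f ∘ spatialShift z - f) 2 (P.prod μ) ^ 2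
        ≤ (2 * e) ^ 2 := by
          gcongr
          exact eLpNorm_comp_sub_self_le (measurePreserving_spatialShift z) hf.1 one_le_two
      _ = 4 * e ^ 2 := by ring
  calc meanGagliardoSq P μ (s - δ) f
      ≤ ENNReal.ofReal C * (2 * ENNReal.ofReal M + 4 * e ^ 2) := by
        rw [meanGagliardoSq_eq_lintegral_eLpNorm_sq hf.1]
        exact h_weight _ _ _ h_near h_far
    _ ≤ ENNReal.ofReal C * (4 * ENNReal.ofReal M + 4 * e ^ 2) := by gcongr; norm_num
    _ = ENNReal.ofReal (4 * C) * (ENNReal.ofReal M + e ^ 2) := by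
        rw [ENNReal.ofReal_mul zero_le_four, ENNReal.ofReal_ofNat]
        ring

/-- Sobolev–Hölder transfer lemma, part (1): if the two-point self-correlation function
`F(z) = E[∫ f(·,x+z) f(·,x) dx]` of a random field `f ∈ L²(Ω; L²(ℝ^d))` satisfies
`|F(z) − F(0)| ≤ M |z|^{2s}` for `0 < |z| < l`, then for every `δ ∈ (0,s)` the expected squared
Gagliardo `H^{s−δ}`-seminorm of `f` is bounded by `C (M + E[‖f‖²_{L²}])`, with `C = C(d,s,δ,l)`. -/
theorem selfcorrelation_to_sobolev (d : ℕ) (hd : 1 ≤ d) (s δ l : ℝ)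
    (hs : s ∈ Set.Ioc (0:ℝ) 1) (hδ : δ ∈ Set.Ioo (0:ℝ) s) (hl : 0 < l) :
    ∃ C : ℝ, 0 < C ∧
      ∀ (Ω : Type) (_ : MeasurableSpace Ω) (P : Measure Ω),
        IsProbabilityMeasure P →
        ∀ f : Ω × EuclideanSpace ℝ (Fin d) → ℝ, Measurable f →
        (∫⁻ ω, ∫⁻ x, ENNReal.ofReal (f (ω, x) ^ 2) ∂volume ∂P) < ⊤ →
        ∀ M : ℝ,
        (∀ z : EuclideanSpace ℝ (Fin d), 0 < ‖z‖ → ‖z‖ < l →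
          |(∫ ω, ∫ x, f (ω, x + z) * f (ω, x) ∂volume ∂P) -
              ∫ ω, ∫ x, f (ω, x) * f (ω, x) ∂volume ∂P| ≤ M * ‖z‖ ^ (2*s)) →
        (∫⁻ ω, ∫⁻ x, ∫⁻ z,
            ENNReal.ofReal ((f (ω, x + z) - f (ω, x)) ^ 2 / ‖z‖ ^ ((d:ℝ) + 2*(s - δ)))
              ∂volume ∂volume ∂P) ≤
          ENNReal.ofReal C *
            (ENNReal.ofReal M +
              ∫⁻ ω, ∫⁻ x, ENNReal.ofReal (f (ω, x) ^ 2) ∂volume ∂P) := by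
  have : Nonempty (Fin d) := ⟨0, hd⟩
  obtain ⟨C, hC, h_bound⟩ := selfcorrelation_to_sobolev_general
    (volume : Measure (EuclideanSpace ℝ (Fin d))) hδ hl
  refine ⟨C, hC, fun Ω _ P _ f hf hf_sq M hM ↦ ?_⟩
  have hf_meas : AEStronglyMeasurable f (P.prod volume) := hf.aestronglyMeasurable
  have hf_L2 : MemLp f 2 (P.prod volume) := (memLp_two_prod_iff hf_meas).2 (by simpa using hf_sq)
  simpa [meanGagliardoSq, eLpNorm_two_sq_prod hf_meas] using h_bound Ω P ℝ f hf_L2 M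
    fun z hz hzl ↦ by simpa [selfCorrelation_real] using (neg_le_abs _).trans (hM z hz hzl)
end

section
/- Let d ≥ 2 be an integer and α ∈ (0,1); set γ := d/(1−α) and r := 2γ/(γ−2). There exists a constant C depending only on d and α such that for every G ∈ C_c^∞(ℝ^d; ℝ): ( ∫_{ℝ^d} |G(z)|^r dz )^{2/r} ≤ C ( ∫_{ℝ^d} min(1, |z|^{2α}) |∇G(z)|² dz + ∫_{ℝ^d} |G(z)|² dz ). -/
open MeasureTheory

/-!
Let `ρ` be a weight comparable to `min 1 ‖z‖`. Testing the divergence of the radial field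
`ρ ^ (2 * α - 2) / (1 + ‖z‖ ^ 2) • z` against `‖u‖ ^ 2` gives a Hardy inequality, which bounds the
energy `∫ ρ ^ (2 * α - 2) * ‖u‖ ^ 2 + ρ ^ (2 * α) * ‖∇u‖ ^ 2` by the right-hand side of the Nash
inequality. The `L¹` Gagliardo–Nirenberg–Sobolev inequality for `ρ ^ α * ‖u‖ ^ (r / 2 + 1)`, whose
gradient is at most `‖u‖ ^ (r / 2)` times the square root of the energy density, and Hölder's
inequality then bound `∫ ‖u‖ ^ r` by a power of the energy times a power less than one of
`∫ ‖u‖ ^ r` itself, which can be absorbed. The weight `min 1 ‖z‖` is replaced by a smooth positive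
`ρ_ε`, and `ε → 0` at the end.
-/

open Module (finrank)

section HasCompactSupport

variable {E V : Type*} [TopologicalSpace E] [MeasurableSpace E] [OpensMeasurableSpace E]
  [NormedAddCommGroup V] {μ : Measure E} [IsFiniteMeasureOnCompacts μ] {v : E → V}

lemma integrable_mul_norm_sq_of_hasCompactSupport {w : E → ℝ} (hw : Continuous w)
    (hv : Continuous v) (hc : HasCompactSupport v) : Integrable (fun z => w z * ‖v z‖ ^ 2) μ :=
  (hw.mul (hv.norm.pow 2)).integrable_of_hasCompactSupport
    (hc.mono fun z hz hvz => hz (by simp [hvz]))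

lemma integrable_norm_rpow_of_hasCompactSupport {s : ℝ} (hs : 0 < s) (hv : Continuous v)
    (hc : HasCompactSupport v) : Integrable (fun z => ‖v z‖ ^ s) μ :=
  (hv.norm.rpow_const fun _ => Or.inr hs.le).integrable_of_hasCompactSupport
    (hc.norm.rpow_const hs.ne')

end HasCompactSupport

section Holder

variable {X : Type*} [MeasurableSpace X] {μ : Measure X} {f g : X → ℝ} {s t : ℝ}

lemma integrable_rpow_mul_rpow (hf : Integrable f μ) (hg : Integrable g μ) (hf0 : 0 ≤ f)
    (hg0 : 0 ≤ g) (hs : 0 ≤ s) (ht : 0 ≤ t) (hst : s + t = 1) :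
    Integrable (fun x => f x ^ s * g x ^ t) μ := by
  refine ((hf.const_mul s).add (hg.const_mul t)).mono'
    ((hf.aemeasurable.pow_const s).mul (hg.aemeasurable.pow_const t)).aestronglyMeasurable
    (.of_forall fun x => ?_)
  rw [Real.norm_of_nonneg (mul_nonneg (Real.rpow_nonneg (hf0 x) s) (Real.rpow_nonneg (hg0 x) t))]
  exact Real.geom_mean_le_arith_mean2_weighted hs ht (hf0 x) (hg0 x) hst

lemma integral_rpow_mul_rpow_le (hf : Integrable f μ) (hg : Integrable g μ) (hf0 : 0 ≤ f)
    (hg0 : 0 ≤ g) (hs : 0 ≤ s) (ht : 0 ≤ t) (hst : s + t = 1) :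
    ∫ x, f x ^ s * g x ^ t ∂μ ≤ (∫ x, f x ∂μ) ^ s * (∫ x, g x ∂μ) ^ t := by
  have hF : 0 ≤ ∫ x, f x ∂μ := integral_nonneg hf0
  have hG : 0 ≤ ∫ x, g x ∂μ := integral_nonneg hg0
  have holder := ENNReal.lintegral_mul_norm_pow_le hf.aemeasurable.ennreal_ofReal
    hg.aemeasurable.ennreal_ofReal hs ht hst
  rw [← ofReal_integral_eq_lintegral_ofReal hf (.of_forall hf0),
    ← ofReal_integral_eq_lintegral_ofReal hg (.of_forall hg0),
    ENNReal.ofReal_rpow_of_nonneg hF hs, ENNReal.ofReal_rpow_of_nonneg hG ht,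
    ← ENNReal.ofReal_mul (by positivity)] at holder
  rw [← ENNReal.ofReal_le_ofReal_iff (by positivity), ofReal_integral_eq_lintegral_ofReal
    (integrable_rpow_mul_rpow hf hg hf0 hg0 hs ht hst)
    (.of_forall fun x => mul_nonneg (Real.rpow_nonneg (hf0 x) s) (Real.rpow_nonneg (hg0 x) t))]
  refine holder.trans_eq' (lintegral_congr fun x => ?_)
  rw [ENNReal.ofReal_mul (Real.rpow_nonneg (hf0 x) s), ENNReal.ofReal_rpow_of_nonneg (hf0 x) hs,
    ENNReal.ofReal_rpow_of_nonneg (hg0 x) ht]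

end Holder

section Euler

variable {E : Type*} [NormedAddCommGroup E] [NormedSpace ℝ E] [MeasurableSpace E] [BorelSpace E]
  {μ : Measure E} {ψ : E → ℝ}

section

variable [IsFiniteMeasureOnCompacts μ]

lemma integrable_clm_mul_fderiv (hψ : ContDiff ℝ 1 ψ) (hc : HasCompactSupport ψ)
    (l : E →L[ℝ] ℝ) (v : E) : Integrable (fun z => l z * fderiv ℝ ψ z v) μ :=
  (l.continuous.mul ((hψ.continuous_fderiv one_ne_zero).clm_apply continuous_const))
    |>.integrable_of_hasCompactSupport (hc.fderiv_apply ℝ v).mul_left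

lemma integrable_fderiv_apply_self (hψ : ContDiff ℝ 1 ψ) (hc : HasCompactSupport ψ) :
    Integrable (fun z => fderiv ℝ ψ z z) μ :=
  ((hψ.continuous_fderiv one_ne_zero).clm_apply continuous_id).integrable_of_hasCompactSupport
    ((hc.fderiv ℝ).mono fun z hz h => hz (by simp [h]))

end

variable [FiniteDimensional ℝ E] [μ.IsAddHaarMeasure]

lemma integral_clm_mul_fderiv (hψ : ContDiff ℝ 1 ψ) (hc : HasCompactSupport ψ)
    (l : E →L[ℝ] ℝ) (v : E) :
    ∫ z, l z * fderiv ℝ ψ z v ∂μ = -(l v * ∫ z, ψ z ∂μ) := by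
  have hψi : Integrable ψ μ := hψ.continuous.integrable_of_hasCompactSupport hc
  rw [integral_mul_fderiv_eq_neg_fderiv_mul_of_integrable]
  · simp only [ContinuousLinearMap.fderiv, integral_const_mul]
  · simpa only [ContinuousLinearMap.fderiv] using hψi.const_mul (l v)
  · exact integrable_clm_mul_fderiv hψ hc l v
  · exact (l.continuous.mul hψ.continuous).integrable_of_hasCompactSupport hc.mul_left
  · exact fun z _ => l.differentiableAt
  · exact fun z _ => hψ.contDiffAt.differentiableAt one_ne_zero

lemma integral_fderiv_apply_self (hψ : ContDiff ℝ 1 ψ) (hc : HasCompactSupport ψ) :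
    ∫ z, fderiv ℝ ψ z z ∂μ = -(finrank ℝ E * ∫ z, ψ z ∂μ) := by
  let b := Module.finBasis ℝ E
  let l i : E →L[ℝ] ℝ := (b.coord i).toContinuousLinearMap
  have expand (z : E) : fderiv ℝ ψ z z = ∑ i, l i z * fderiv ℝ ψ z (b i) := by
    conv_lhs => rw [← b.sum_repr z, map_sum]
    simp [l]
  have hl i : l i (b i) = 1 := by simp [l]
  simp_rw [expand]
  rw [integral_finsetSum _ fun i _ => integrable_clm_mul_fderiv hψ hc (l i) (b i)]
  simp only [integral_clm_mul_fderiv hψ hc, hl, one_mul, Finset.sum_const, Finset.card_univ,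
    Fintype.card_fin, nsmul_eq_mul, mul_neg]

end Euler

section Hardy

variable {E F : Type*} [NormedAddCommGroup E] [NormedSpace ℝ E] [NormedAddCommGroup F]
  [InnerProductSpace ℝ F]

lemma fderiv_mul_norm_sq_apply {φ : E → ℝ} {u : E → F} {z : E} (hφ : DifferentiableAt ℝ φ z)
    (hu : DifferentiableAt ℝ u z) (v : E) :
    fderiv ℝ (fun z => φ z * ‖u z‖ ^ 2) z v =
      fderiv ℝ φ z v * ‖u z‖ ^ 2 + 2 * φ z * inner ℝ (u z) (fderiv ℝ u z v) := by
  have h : HasFDerivAt (fun z => φ z * ‖u z‖ ^ 2) _ z :=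
    hφ.hasFDerivAt.mul hu.hasFDerivAt.norm_sq
  rw [h.fderiv]
  simp only [add_apply, smul_apply, ContinuousLinearMap.comp_apply, coe_innerSL_apply,
    nsmul_eq_mul, Nat.cast_ofNat, smul_eq_mul]
  ring

lemma sq_mul_norm_sq_le_of_le_divergence {φ : E → ℝ} {a b n K L : ℝ} {u : E → F} {z : E}
    (hK : 0 ≤ K) (hφ : DifferentiableAt ℝ φ z) (hu : DifferentiableAt ℝ u z)
    (hdiv : a ^ 2 ≤ K * (n * φ z + fderiv ℝ φ z z) + L) (hab : |φ z| * ‖z‖ ≤ a * b) :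
    a ^ 2 * ‖u z‖ ^ 2 ≤
      2 * K * (n * (φ z * ‖u z‖ ^ 2) + fderiv ℝ (fun z => φ z * ‖u z‖ ^ 2) z z) +
        4 * K ^ 2 * (b ^ 2 * ‖fderiv ℝ u z‖ ^ 2) + 2 * L * ‖u z‖ ^ 2 := by
  have hcross : -(φ z * inner ℝ (u z) (fderiv ℝ u z z)) ≤
      (a * ‖u z‖) * (b * ‖fderiv ℝ u z‖) := calc
    _ ≤ |φ z| * |inner ℝ (u z) (fderiv ℝ u z z)| := (neg_le_abs _).trans_eq (abs_mul _ _)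
    _ ≤ |φ z| * (‖u z‖ * (‖fderiv ℝ u z‖ * ‖z‖)) := by
      gcongr
      exact (abs_real_inner_le_norm _ _).trans (by gcongr; exact ContinuousLinearMap.le_opNorm _ _)
    _ = |φ z| * ‖z‖ * (‖u z‖ * ‖fderiv ℝ u z‖) := by ring
    _ ≤ a * b * (‖u z‖ * ‖fderiv ℝ u z‖) := mul_le_mul_of_nonneg_right hab (by positivity)
    _ = _ := by ring
  rw [fderiv_mul_norm_sq_apply hφ hu]
  have hdiv_mul := mul_le_mul_of_nonneg_right hdiv (sq_nonneg ‖u z‖)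
  have hcross_mul := mul_le_mul_of_nonneg_left hcross hK
  have hyoung := sq_nonneg (a * ‖u z‖ - 2 * K * (b * ‖fderiv ℝ u z‖))
  linarith

variable [MeasurableSpace E] [BorelSpace E] [FiniteDimensional ℝ E] {μ : Measure E}
  [μ.IsAddHaarMeasure]

theorem integral_sq_mul_norm_sq_le_of_le_divergence {φ a b : E → ℝ} {K L : ℝ} (hK : 0 ≤ K)
    (hφ : ContDiff ℝ 1 φ) (hb : Continuous b)
    (hdiv : ∀ z, a z ^ 2 ≤ K * (finrank ℝ E * φ z + fderiv ℝ φ z z) + L)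
    (hab : ∀ z, |φ z| * ‖z‖ ≤ a z * b z)
    {u : E → F} (hu : ContDiff ℝ 1 u) (hc : HasCompactSupport u) :
    ∫ z, a z ^ 2 * ‖u z‖ ^ 2 ∂μ ≤
      4 * K ^ 2 * ∫ z, b z ^ 2 * ‖fderiv ℝ u z‖ ^ 2 ∂μ + 2 * L * ∫ z, ‖u z‖ ^ 2 ∂μ := by
  set ψ : E → ℝ := fun z => φ z * ‖u z‖ ^ 2 with hψ
  have hψ1 : ContDiff ℝ 1 ψ := hφ.mul (hu.norm_sq ℝ)
  have hψc : HasCompactSupport ψ := hc.mono fun z hz huz => hz (by simp [hψ, huz])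
  have hψi : Integrable ψ μ := hψ1.continuous.integrable_of_hasCompactSupport hψc
  have hdψi : Integrable (fun z => finrank ℝ E * ψ z + fderiv ℝ ψ z z) μ :=
    (hψi.const_mul _).add (integrable_fderiv_apply_self hψ1 hψc)
  have euler : ∫ z, (finrank ℝ E * ψ z + fderiv ℝ ψ z z) ∂μ = 0 := by
    rw [integral_add (hψi.const_mul _) (integrable_fderiv_apply_self hψ1 hψc), integral_const_mul,
      integral_fderiv_apply_self hψ1 hψc, add_neg_cancel]
  have hbi : Integrable (fun z => b z ^ 2 * ‖fderiv ℝ u z‖ ^ 2) μ :=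
    integrable_mul_norm_sq_of_hasCompactSupport (hb.pow 2) (hu.continuous_fderiv one_ne_zero)
      (hc.fderiv ℝ)
  have hui : Integrable (fun z => ‖u z‖ ^ 2) μ :=
    (hu.norm_sq ℝ).continuous.integrable_of_hasCompactSupport
      (hc.mono fun z hz huz => hz (by simp [huz]))
  calc ∫ z, a z ^ 2 * ‖u z‖ ^ 2 ∂μ
    _ ≤ ∫ z, (2 * K * (finrank ℝ E * ψ z + fderiv ℝ ψ z z) +
          4 * K ^ 2 * (b z ^ 2 * ‖fderiv ℝ u z‖ ^ 2) + 2 * L * ‖u z‖ ^ 2) ∂μ :=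
      integral_mono_of_nonneg (.of_forall fun z => by positivity)
        (((hdψi.const_mul _).add (hbi.const_mul _)).add (hui.const_mul _)) (.of_forall fun z =>
          sq_mul_norm_sq_le_of_le_divergence hK (hφ.differentiable one_ne_zero z)
            (hu.differentiable one_ne_zero z) (hdiv z) (hab z))
    _ = _ := by
      rw [integral_add ((hdψi.const_mul _).fun_add (hbi.const_mul _)) (hui.const_mul _),
        integral_add (hdψi.const_mul _) (hbi.const_mul _)]
      simp only [integral_const_mul, euler, mul_zero, zero_add]

end Hardy

section GagliardoNirenbergSobolev

variable {E F : Type*} [NormedAddCommGroup E] [NormedSpace ℝ E] [MeasurableSpace E] [BorelSpace E]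
  (μ : Measure E) [FiniteDimensional ℝ E] [μ.IsAddHaarMeasure]
  [NormedAddCommGroup F] [NormedSpace ℝ F]

lemma integral_norm_rpow_le_integral_norm_fderiv_rpow {p : ℝ}
    (hp : Real.HolderConjugate (finrank ℝ E) p) {f : E → F} (hf : ContDiff ℝ 1 f)
    (hc : HasCompactSupport f) :
    ∫ z, ‖f z‖ ^ p ∂μ ≤
      lintegralPowLePowLIntegralFDerivConst μ p * (∫ z, ‖fderiv ℝ f z‖ ∂μ) ^ p := by
  have hp0 : 0 < p := hp.symm.pos
  have hfp := integrable_norm_rpow_of_hasCompactSupport (μ := μ) hp0 hf.continuous hc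
  have hf' : Integrable (fderiv ℝ f) μ :=
    (hf.continuous_fderiv one_ne_zero).integrable_of_hasCompactSupport (hc.fderiv ℝ)
  have gns := lintegral_pow_le_pow_lintegral_fderiv μ hf hc hp
  rw [← ENNReal.ofReal_le_ofReal_iff (by positivity),
    ofReal_integral_eq_lintegral_ofReal hfp (.of_forall fun z => by positivity),
    ENNReal.ofReal_mul (by positivity), ENNReal.ofReal_coe_nnreal,
    ← ENNReal.ofReal_rpow_of_nonneg (by positivity) hp0.le,
    ofReal_integral_norm_eq_lintegral_enorm hf']
  simpa only [← ENNReal.ofReal_rpow_of_nonneg (norm_nonneg _) hp0.le, ofReal_norm] using gns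

end GagliardoNirenbergSobolev

section Interpolation

lemma rpow_le_of_le_mul_rpow_mul_rpow {N K A β σ : ℝ} (hN : 0 ≤ N) (hK : 0 ≤ K) (hA : 0 ≤ A)
    (hβ : β < 1) (hσ : 0 < σ) (h : N ≤ K * N ^ β * A ^ σ) :
    N ^ ((1 - β) / σ) ≤ K ^ (1 / σ) * A := by
  rcases hN.eq_or_lt with rfl | hN
  · rw [Real.zero_rpow (div_pos (by linarith) hσ).ne']
    positivity
  have habsorbed : N ^ (1 - β) ≤ K * A ^ σ := by
    rw [Real.rpow_sub hN, Real.rpow_one, div_le_iff₀ (by positivity)]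
    linarith
  calc N ^ ((1 - β) / σ) = (N ^ (1 - β)) ^ (1 / σ) := by
        rw [← Real.rpow_mul hN.le, mul_one_div]
    _ ≤ (K * A ^ σ) ^ (1 / σ) := by gcongr
    _ = K ^ (1 / σ) * A := by
        rw [Real.mul_rpow hK (by positivity), ← Real.rpow_mul hA, mul_one_div_cancel hσ.ne',
          Real.rpow_one]

variable {E F : Type*} [NormedAddCommGroup E] [NormedSpace ℝ E] [NormedAddCommGroup F]

section CKNDensity

variable [NormedSpace ℝ F] {ρ : E → ℝ} {u : E → F}

/-- The density `ρ^{2α-2} |u|² + ρ^{2α} |∇u|²` of the Caffarelli–Kohn–Nirenberg energy of `u`, where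
the weight `ρ` stands in for `|z|`. -/
noncomputable def cknDensity (ρ : E → ℝ) (α : ℝ) (u : E → F) (z : E) : ℝ :=
  (ρ z ^ (α - 1)) ^ 2 * ‖u z‖ ^ 2 + (ρ z ^ α) ^ 2 * ‖fderiv ℝ u z‖ ^ 2

lemma cknDensity_nonneg (ρ : E → ℝ) (α : ℝ) (u : E → F) (z : E) :
    0 ≤ cknDensity ρ α u z := by
  unfold cknDensity
  positivity

lemma integrable_cknDensity [MeasurableSpace E] [OpensMeasurableSpace E]
    {μ : Measure E} [IsFiniteMeasureOnCompacts μ] {α : ℝ}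
    (hρ : Continuous ρ) (hρ0 : ∀ z, ρ z ≠ 0) (hu : ContDiff ℝ 1 u) (hc : HasCompactSupport u) :
    Integrable (cknDensity ρ α u) μ :=
  have hρ' (s : ℝ) : Continuous fun z => (ρ z ^ s) ^ 2 :=
    (hρ.rpow_const fun z => Or.inl (hρ0 z)).pow 2
  (integrable_mul_norm_sq_of_hasCompactSupport (hρ' (α - 1)) hu.continuous hc).add
    (integrable_mul_norm_sq_of_hasCompactSupport (hρ' α) (hu.continuous_fderiv one_ne_zero)
      (hc.fderiv ℝ))

lemma norm_rpow_le_cknDensity_rpow_mul {α θ p q r : ℝ} {z : E} (hρ : 0 < ρ z) (hr : 0 < r)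
    (hθ : 0 ≤ θ) (hbalρ : (2 * α - 2) * θ + α * p * (1 - θ) = 0)
    (hbalu : 2 * θ + q * p * (1 - θ) = r) :
    ‖u z‖ ^ r ≤ cknDensity ρ α u z ^ θ * (‖ρ z ^ α * ‖u z‖ ^ q‖ ^ p) ^ (1 - θ) := by
  rcases (norm_nonneg (u z)).eq_or_lt with hu | hu
  · rw [← hu, Real.zero_rpow hr.ne']
    have := cknDensity_nonneg ρ α u z
    positivity
  calc ‖u z‖ ^ r
    _ = ρ z ^ ((2 * α - 2) * θ + α * p * (1 - θ)) * ‖u z‖ ^ (2 * θ + q * p * (1 - θ)) := by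
      rw [hbalρ, hbalu, Real.rpow_zero, one_mul]
    _ = ((ρ z ^ (α - 1)) ^ (2 : ℝ) * ‖u z‖ ^ (2 : ℝ)) ^ θ *
          ((ρ z ^ α * ‖u z‖ ^ q) ^ p) ^ (1 - θ) := by
      simp only [Real.mul_rpow, Real.rpow_nonneg, hρ.le, hu.le, ← Real.rpow_mul]
      rw [mul_mul_mul_comm, ← Real.rpow_add hρ, ← Real.rpow_add hu]
      ring_nf
    _ = ((ρ z ^ (α - 1)) ^ 2 * ‖u z‖ ^ 2) ^ θ * (‖ρ z ^ α * ‖u z‖ ^ q‖ ^ p) ^ (1 - θ) := by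
      rw [Real.rpow_two, Real.rpow_two, Real.norm_of_nonneg (by positivity)]
    _ ≤ _ := by
      gcongr
      exact le_add_of_nonneg_right (by positivity)

end CKNDensity

variable [InnerProductSpace ℝ F] {ρ : E → ℝ} {u : E → F}

lemma norm_fderiv_rpow_mul_norm_rpow_le {α q : ℝ} {z : E} (hq : 1 < q)
    (hρ : DifferentiableAt ℝ ρ z) (hρ0 : 0 < ρ z) (hρ' : ‖fderiv ℝ ρ z‖ ≤ 1)
    (hu : Differentiable ℝ u) :
    ‖fderiv ℝ (fun z => ρ z ^ α * ‖u z‖ ^ q) z‖ ≤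
      ‖u z‖ ^ (q - 1) * (|α| * (ρ z ^ (α - 1) * ‖u z‖) + q * (ρ z ^ α * ‖fderiv ℝ u z‖)) := by
  have hdρ := hρ.hasFDerivAt.rpow_const (p := α) (Or.inl hρ0.ne')
  have hdu := (hu.norm_rpow hq z).hasFDerivAt
  have hnρ : ‖(α * ρ z ^ (α - 1)) • fderiv ℝ ρ z‖ ≤ |α| * ρ z ^ (α - 1) := by
    rw [norm_smul, Real.norm_eq_abs, abs_mul, abs_of_pos (Real.rpow_pos_of_pos hρ0 _)]
    exact mul_le_of_le_one_right (by positivity) hρ'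
  rw [fderiv_fun_mul hdρ.differentiableAt hdu.differentiableAt, hdρ.fderiv]
  calc _ ≤ ρ z ^ α * (q * ‖u z‖ ^ (q - 1) * ‖fderiv ℝ u z‖) +
        ‖u z‖ ^ q * (|α| * ρ z ^ (α - 1)) := by
        refine (norm_add_le _ _).trans ?_
        rw [norm_smul, norm_smul, Real.norm_of_nonneg (by positivity : 0 ≤ ρ z ^ α),
          Real.norm_of_nonneg (by positivity : 0 ≤ ‖u z‖ ^ q)]
        gcongr
        exact norm_fderiv_norm_rpow_le hu hq
    _ = _ := by
        rw [show ‖u z‖ ^ q = ‖u z‖ ^ (q - 1) * ‖u z‖ by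
          rw [← Real.rpow_add_one' (norm_nonneg _) (by linarith), sub_add_cancel]]
        ring

lemma norm_fderiv_rpow_mul_norm_rpow_le_cknDensity {α r : ℝ} {z : E} (hr : 0 < r)
    (hρ : DifferentiableAt ℝ ρ z) (hρ0 : 0 < ρ z) (hρ' : ‖fderiv ℝ ρ z‖ ≤ 1)
    (hu : Differentiable ℝ u) :
    ‖fderiv ℝ (fun z => ρ z ^ α * ‖u z‖ ^ (r / 2 + 1)) z‖ ≤
      (‖u z‖ ^ r) ^ (1 / 2 : ℝ) *
        ((α ^ 2 + (r / 2 + 1) ^ 2) * cknDensity ρ α u z) ^ (1 / 2 : ℝ) := by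
  refine (norm_fderiv_rpow_mul_norm_rpow_le (by linarith) hρ hρ0 hρ' hu).trans ?_
  rw [← Real.rpow_mul (norm_nonneg _), add_sub_cancel_right, mul_one_div,
    ← Real.sqrt_eq_rpow ((α ^ 2 + (r / 2 + 1) ^ 2) * cknDensity ρ α u z)]
  gcongr
  refine Real.le_sqrt_of_sq_le ?_
  unfold cknDensity
  set x := ρ z ^ (α - 1) * ‖u z‖ with hx
  set y := ρ z ^ α * ‖fderiv ℝ u z‖ with hy
  calc (|α| * x + (r / 2 + 1) * y) ^ 2 ≤ (|α| ^ 2 + (r / 2 + 1) ^ 2) * (x ^ 2 + y ^ 2) := by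
        nlinarith [sq_nonneg (|α| * y - (r / 2 + 1) * x)]
    _ = _ := by rw [sq_abs, hx, hy, mul_pow, mul_pow]

variable [MeasurableSpace E] [BorelSpace E] (μ : Measure E)

section

variable [IsFiniteMeasureOnCompacts μ]

lemma integral_norm_fderiv_rpow_mul_norm_rpow_le {α r : ℝ} (hr : 0 < r) (hρ : ContDiff ℝ 1 ρ)
    (hρ0 : ∀ z, 0 < ρ z) (hρ' : ∀ z, ‖fderiv ℝ ρ z‖ ≤ 1) (hu : ContDiff ℝ 1 u)
    (hc : HasCompactSupport u) :
    ∫ z, ‖fderiv ℝ (fun z => ρ z ^ α * ‖u z‖ ^ (r / 2 + 1)) z‖ ∂μ ≤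
      ((∫ z, ‖u z‖ ^ r ∂μ) *
        ((α ^ 2 + (r / 2 + 1) ^ 2) * ∫ z, cknDensity ρ α u z ∂μ)) ^ (1 / 2 : ℝ) := by
  set κ : ℝ := α ^ 2 + (r / 2 + 1) ^ 2
  have hui : Integrable (fun z => ‖u z‖ ^ r) μ :=
    integrable_norm_rpow_of_hasCompactSupport hr hu.continuous hc
  have hei : Integrable (fun z => κ * cknDensity ρ α u z) μ :=
    (integrable_cknDensity hρ.continuous (fun z => (hρ0 z).ne') hu hc).const_mul κ
  have hu0 : 0 ≤ fun z => ‖u z‖ ^ r := fun z => by positivity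
  have he0 : 0 ≤ fun z => κ * cknDensity ρ α u z := fun z =>
    mul_nonneg (by positivity) (cknDensity_nonneg ρ α u z)
  have hhalf : (0 : ℝ) ≤ 1 / 2 := by norm_num
  calc ∫ z, ‖fderiv ℝ (fun z => ρ z ^ α * ‖u z‖ ^ (r / 2 + 1)) z‖ ∂μ
    _ ≤ ∫ z, (‖u z‖ ^ r) ^ (1 / 2 : ℝ) * (κ * cknDensity ρ α u z) ^ (1 / 2 : ℝ) ∂μ :=
      integral_mono_of_nonneg (.of_forall fun z => norm_nonneg _)
        (integrable_rpow_mul_rpow hui hei hu0 he0 hhalf hhalf (add_halves 1))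
        (.of_forall fun z => norm_fderiv_rpow_mul_norm_rpow_le_cknDensity hr
          (hρ.differentiable one_ne_zero z) (hρ0 z) (hρ' z) (hu.differentiable one_ne_zero))
    _ ≤ (∫ z, ‖u z‖ ^ r ∂μ) ^ (1 / 2 : ℝ) * (∫ z, κ * cknDensity ρ α u z ∂μ) ^ (1 / 2 : ℝ) :=
      integral_rpow_mul_rpow_le hui hei hu0 he0 hhalf hhalf (add_halves 1)
    _ = _ := by
      rw [integral_const_mul, Real.mul_rpow (integral_nonneg hu0)]
      exact mul_nonneg (by positivity) (integral_nonneg (cknDensity_nonneg ρ α u))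

lemma integral_norm_rpow_le_cknDensity_rpow_mul {α θ p q r : ℝ} (hp : 0 < p) (hq : 0 < q)
    (hr : 0 < r) (hθ0 : 0 ≤ θ) (hθ1 : θ ≤ 1)
    (hbalρ : (2 * α - 2) * θ + α * p * (1 - θ) = 0) (hbalu : 2 * θ + q * p * (1 - θ) = r)
    (hρ : Continuous ρ) (hρ0 : ∀ z, 0 < ρ z) (hu : ContDiff ℝ 1 u) (hc : HasCompactSupport u) :
    ∫ z, ‖u z‖ ^ r ∂μ ≤ (∫ z, cknDensity ρ α u z ∂μ) ^ θ *
      (∫ z, ‖ρ z ^ α * ‖u z‖ ^ q‖ ^ p ∂μ) ^ (1 - θ) := by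
  have he : Integrable (cknDensity ρ α u) μ :=
    integrable_cknDensity hρ (fun z => (hρ0 z).ne') hu hc
  have hf : Integrable (fun z => ‖ρ z ^ α * ‖u z‖ ^ q‖ ^ p) μ :=
    integrable_norm_rpow_of_hasCompactSupport hp
      ((hρ.rpow_const fun z => Or.inl (hρ0 z).ne').mul
        (hu.continuous.norm.rpow_const fun _ => Or.inr hq.le))
      (hc.norm.rpow_const hq.ne').mul_left
  have he0 : 0 ≤ cknDensity ρ α u := cknDensity_nonneg ρ α u
  have hf0 : 0 ≤ fun z => ‖ρ z ^ α * ‖u z‖ ^ q‖ ^ p := fun z => by positivity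
  calc ∫ z, ‖u z‖ ^ r ∂μ
    _ ≤ ∫ z, cknDensity ρ α u z ^ θ * (‖ρ z ^ α * ‖u z‖ ^ q‖ ^ p) ^ (1 - θ) ∂μ :=
      integral_mono_of_nonneg (.of_forall fun z => by positivity)
        (integrable_rpow_mul_rpow he hf he0 hf0 hθ0 (by linarith) (by ring))
        (.of_forall fun z => norm_rpow_le_cknDensity_rpow_mul (hρ0 z) hr hθ0 hbalρ hbalu)
    _ ≤ _ := integral_rpow_mul_rpow_le he hf he0 hf0 hθ0 (by linarith) (by ring)

end

variable [FiniteDimensional ℝ E] [μ.IsAddHaarMeasure]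

lemma integral_norm_rpow_le_mul_rpow_integral_cknDensity {α θ p r : ℝ}
    (hp : Real.HolderConjugate (finrank ℝ E) p) (hr : 0 < r) (hθ0 : 0 ≤ θ) (hθ1 : θ ≤ 1)
    (hbalρ : (2 * α - 2) * θ + α * p * (1 - θ) = 0)
    (hbalu : 2 * θ + (r / 2 + 1) * p * (1 - θ) = r)
    (hρ : ContDiff ℝ 1 ρ) (hρ0 : ∀ z, 0 < ρ z) (hρ' : ∀ z, ‖fderiv ℝ ρ z‖ ≤ 1)
    (hu : ContDiff ℝ 1 u) (hc : HasCompactSupport u) :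
    ∫ z, ‖u z‖ ^ r ∂μ ≤ lintegralPowLePowLIntegralFDerivConst μ p ^ (1 - θ) *
      (α ^ 2 + (r / 2 + 1) ^ 2) ^ (p * (1 - θ) / 2) * (∫ z, ‖u z‖ ^ r ∂μ) ^ (p * (1 - θ) / 2) *
      (∫ z, cknDensity ρ α u z ∂μ) ^ (θ + p * (1 - θ) / 2) := by
  set S := lintegralPowLePowLIntegralFDerivConst μ p
  set κ : ℝ := α ^ 2 + (r / 2 + 1) ^ 2
  set N := ∫ z, ‖u z‖ ^ r ∂μ
  set A := ∫ z, cknDensity ρ α u z ∂μ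
  have hp0 : 0 < p := hp.symm.pos
  have : 0 ≤ 1 - θ := by linarith
  have hN : 0 ≤ N := integral_nonneg fun z => by positivity
  have hA : 0 ≤ A := integral_nonneg (cknDensity_nonneg ρ α u)
  have hsobolev : ∫ z, ‖ρ z ^ α * ‖u z‖ ^ (r / 2 + 1)‖ ^ p ∂μ ≤
      S * ((N * (κ * A)) ^ (1 / 2 : ℝ)) ^ p := by
    refine (integral_norm_rpow_le_integral_norm_fderiv_rpow μ hp
      ((hρ.rpow_const_of_ne fun z => (hρ0 z).ne').mul (hu.norm_rpow (by linarith)))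
      (hc.norm.rpow_const (by linarith)).mul_left).trans ?_
    gcongr
    exact integral_norm_fderiv_rpow_mul_norm_rpow_le μ hr hρ hρ0 hρ' hu hc
  calc N ≤ A ^ θ * (S * ((N * (κ * A)) ^ (1 / 2 : ℝ)) ^ p) ^ (1 - θ) := by
        refine (integral_norm_rpow_le_cknDensity_rpow_mul μ hp0 (by linarith) hr hθ0 hθ1 hbalρ
          hbalu hρ.continuous hρ0 hu hc).trans ?_
        gcongr
    _ = A ^ θ * (S ^ (1 - θ) * (N * (κ * A)) ^ (p * (1 - θ) / 2)) := by
        rw [Real.mul_rpow (by positivity) (by positivity), ← Real.rpow_mul (by positivity),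
          ← Real.rpow_mul (by positivity), one_div_mul_eq_div]
    _ = _ := by
        rw [Real.rpow_add_of_nonneg hA hθ0 (by positivity), Real.mul_rpow hN (by positivity),
          Real.mul_rpow (by positivity) hA]
        ring

theorem exists_integral_norm_rpow_le_mul_integral_cknDensity {α θ p r : ℝ}
    (hp : Real.HolderConjugate (finrank ℝ E) p) (hr : 0 < r) (hθ0 : 0 ≤ θ) (hθ1 : θ ≤ 1)
    (hbalρ : (2 * α - 2) * θ + α * p * (1 - θ) = 0)
    (hbalu : 2 * θ + (r / 2 + 1) * p * (1 - θ) = r) :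
    ∃ C, 0 ≤ C ∧ ∀ (ρ : E → ℝ) (u : E → F), ContDiff ℝ 1 ρ → (∀ z, 0 < ρ z) →
      (∀ z, ‖fderiv ℝ ρ z‖ ≤ 1) → ContDiff ℝ 1 u → HasCompactSupport u →
        (∫ z, ‖u z‖ ^ r ∂μ) ^ (2 / r) ≤ C * ∫ z, cknDensity ρ α u z ∂μ := by
  have hβσ : r * (1 - p * (1 - θ) / 2) = 2 * (θ + p * (1 - θ) / 2) := by
    linear_combination -hbalu
  have hσ : 0 < θ + p * (1 - θ) / 2 := by nlinarith [hp.symm.lt]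
  have hβ : p * (1 - θ) / 2 < 1 := by nlinarith [hβσ]
  have hexp : (1 - p * (1 - θ) / 2) / (θ + p * (1 - θ) / 2) = 2 / r := by
    rw [div_eq_div_iff hσ.ne' hr.ne']
    linarith
  refine ⟨_, ?_, fun ρ u hρ hρ0 hρ' hu hc => hexp ▸ rpow_le_of_le_mul_rpow_mul_rpow
    (integral_nonneg fun z => by positivity) ?_ (integral_nonneg (cknDensity_nonneg ρ α u)) hβ hσ
    (integral_norm_rpow_le_mul_rpow_integral_cknDensity μ hp hr hθ0 hθ1 hbalρ hbalu hρ hρ0 hρ'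
      hu hc)⟩
  all_goals positivity

end Interpolation

section TruncNorm

variable {E : Type*} [NormedAddCommGroup E] {ε : ℝ}

/-- A positive smooth regularization of `‖z‖ / √(1 + ‖z‖ ^ 2)`, which stands in for the comparable
weight `min 1 ‖z‖`. -/
noncomputable def truncNorm (ε : ℝ) (z : E) : ℝ :=
  √((‖z‖ ^ 2 + ε) / (1 + ‖z‖ ^ 2))

lemma sq_truncNorm (hε : 0 < ε) (z : E) :
    truncNorm ε z ^ 2 = (‖z‖ ^ 2 + ε) / (1 + ‖z‖ ^ 2) :=
  Real.sq_sqrt (by positivity)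

lemma truncNorm_pos (hε : 0 < ε) (z : E) : 0 < truncNorm ε z :=
  Real.sqrt_pos.2 (by positivity)

lemma norm_le_one_add_norm_sq_mul_truncNorm (hε : 0 < ε) (z : E) :
    ‖z‖ ≤ (1 + ‖z‖ ^ 2) * truncNorm ε z := by
  refine le_of_sq_le_sq ?_ (mul_nonneg (by positivity) (truncNorm_pos hε z).le)
  rw [mul_pow, sq_truncNorm hε]
  field_simp
  nlinarith [sq_nonneg ‖z‖]

lemma truncNorm_rpow_two_mul_le {α : ℝ} (hα0 : 0 ≤ α) (hα1 : α ≤ 1) (hε : 0 < ε) (z : E) :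
    truncNorm ε z ^ (2 * α) ≤ min 1 (‖z‖ ^ (2 * α)) + ε ^ α := by
  have hle {x : ℝ} (hx : 0 ≤ x) (h : (‖z‖ ^ 2 + ε) / (1 + ‖z‖ ^ 2) ≤ x + ε) :
      truncNorm ε z ^ (2 * α) ≤ x ^ α + ε ^ α := calc
    _ = ((‖z‖ ^ 2 + ε) / (1 + ‖z‖ ^ 2)) ^ α := by
      rw [Real.rpow_mul (truncNorm_pos hε z).le, Real.rpow_two, sq_truncNorm hε]
    _ ≤ (x + ε) ^ α := by gcongr
    _ ≤ x ^ α + ε ^ α := Real.rpow_add_le_add_rpow hx hε.le hα0 hα1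
  rw [← min_add_add_right, le_min_iff]
  constructor
  · simpa only [Real.one_rpow] using hle zero_le_one ((div_le_iff₀ (by positivity)).2
      (by nlinarith [mul_nonneg hε.le (sq_nonneg ‖z‖)]))
  · rw [Real.rpow_mul (norm_nonneg z), Real.rpow_two]
    exact hle (sq_nonneg _) (div_le_self (by positivity) (by nlinarith [sq_nonneg ‖z‖]))

lemma truncNorm_rpow_le {s : ℝ} (hs0 : s ≤ 0) (hs : -2 ≤ s) (hε : 0 < ε) (z : E) :
    truncNorm ε z ^ s ≤ 4 * (truncNorm ε z ^ s / (1 + ‖z‖ ^ 2) ^ 2) + 2 := by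
  have hρ := truncNorm_pos hε z
  rcases le_total (‖z‖ ^ 2) 1 with h | h
  · have : truncNorm ε z ^ s ≤ 4 * (truncNorm ε z ^ s / (1 + ‖z‖ ^ 2) ^ 2) := by
      rw [mul_div_left_comm]
      refine le_mul_of_one_le_right (by positivity) ?_
      rw [one_le_div (by positivity)]
      nlinarith [sq_nonneg ‖z‖]
    linarith
  · have hhalf : 1 / 2 ≤ truncNorm ε z ^ 2 := by
      rw [sq_truncNorm hε, div_le_div_iff₀ (by positivity) (by positivity)]
      linarith
    have hle_two : truncNorm ε z ^ s ≤ 2 := calc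
      _ = (truncNorm ε z ^ 2) ^ (s / 2) := by
        rw [← Real.rpow_two, ← Real.rpow_mul hρ.le, mul_div_cancel₀ s two_ne_zero]
      _ ≤ (1 / 2) ^ (s / 2) := Real.rpow_le_rpow_of_nonpos (by norm_num) hhalf (by linarith)
      _ ≤ (1 / 2) ^ (-1 : ℝ) :=
        Real.rpow_le_rpow_of_exponent_ge (by norm_num) (by norm_num) (by linarith)
      _ = 2 := by norm_num [Real.rpow_neg_one]
    have : 0 ≤ 4 * (truncNorm ε z ^ s / (1 + ‖z‖ ^ 2) ^ 2) := by positivity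
    linarith

variable [InnerProductSpace ℝ E]

lemma contDiff_truncNorm (hε : 0 < ε) : ContDiff ℝ 1 (truncNorm ε : E → ℝ) :=
  ContDiff.sqrt (((contDiff_norm_sq ℝ).add contDiff_const).div
    (contDiff_const.add (contDiff_norm_sq ℝ)) fun z => by positivity) fun z => by positivity

lemma hasFDerivAt_truncNorm (hε : 0 < ε) (z : E) :
    HasFDerivAt (truncNorm ε)
      (((1 - ε) / (truncNorm ε z * (1 + ‖z‖ ^ 2) ^ 2)) • innerSL ℝ z) z := by
  have hsq : HasFDerivAt (fun z : E => ‖z‖ ^ 2) (2 • innerSL ℝ z) z :=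
    (hasStrictFDerivAt_norm_sq z).hasFDerivAt
  have hquot : HasDerivAt (fun t : ℝ => (t + ε) / (1 + t)) ((1 - ε) / (1 + ‖z‖ ^ 2) ^ 2)
      (‖z‖ ^ 2) := by
    refine (((hasDerivAt_id' _).add_const ε).div ((hasDerivAt_id' _).const_add 1)
      (by positivity)).congr_deriv ?_
    ring
  refine ((hquot.comp_hasFDerivAt z hsq).sqrt ?_).congr_fderiv ?_
  · dsimp only [Function.comp]
    positivity
  · ext v
    simp only [Function.comp_apply, one_div, mul_inv_rev, smul_apply, coe_innerSL_apply,
      nsmul_eq_mul, Nat.cast_ofNat, smul_eq_mul, truncNorm]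
    field_simp

lemma norm_fderiv_truncNorm_le_one (hε : 0 < ε) (hε1 : ε ≤ 1) (z : E) :
    ‖fderiv ℝ (truncNorm ε) z‖ ≤ 1 := by
  have hρ := truncNorm_pos hε z
  rw [(hasFDerivAt_truncNorm hε z).fderiv, norm_smul, innerSL_apply_norm, Real.norm_of_nonneg
    (div_nonneg (by linarith) (by positivity)), div_mul_eq_mul_div, div_le_one (by positivity)]
  calc (1 - ε) * ‖z‖ ≤ 1 * ((1 + ‖z‖ ^ 2) * truncNorm ε z) := by
        gcongr
        · linarith
        · exact norm_le_one_add_norm_sq_mul_truncNorm hε z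
    _ ≤ truncNorm ε z * (1 + ‖z‖ ^ 2) ^ 2 := by
      nlinarith [mul_nonneg hρ.le (sq_nonneg ‖z‖), mul_nonneg hρ.le (sq_nonneg (‖z‖ ^ 2))]

lemma fderiv_truncNorm_apply_self_le (hε : 0 < ε) (z : E) :
    fderiv ℝ (truncNorm ε) z z ≤ truncNorm ε z / (1 + ‖z‖ ^ 2) := by
  have hρ := truncNorm_pos hε z
  rw [(hasFDerivAt_truncNorm hε z).fderiv]
  simp only [smul_apply, innerSL_apply_apply, real_inner_self_eq_norm_sq, smul_eq_mul]
  rw [div_mul_eq_mul_div, div_le_div_iff₀ (by positivity) (by positivity)]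
  have : truncNorm ε z * (truncNorm ε z * (1 + ‖z‖ ^ 2) ^ 2) = (‖z‖ ^ 2 + ε) * (1 + ‖z‖ ^ 2) := by
    rw [← mul_assoc, ← sq, sq_truncNorm hε]
    field_simp
  rw [this]
  gcongr
  nlinarith [sq_nonneg ‖z‖]

lemma fderiv_truncNorm_rpow_mul_inv_apply_self {s : ℝ} (hε : 0 < ε) (z : E) :
    fderiv ℝ (fun z : E => truncNorm ε z ^ s * (1 + ‖z‖ ^ 2)⁻¹) z z =
      truncNorm ε z ^ s * (1 + ‖z‖ ^ 2)⁻¹ * (s * (fderiv ℝ (truncNorm ε) z z / truncNorm ε z) -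
        2 * ‖z‖ ^ 2 / (1 + ‖z‖ ^ 2)) := by
  have hρ := truncNorm_pos hε z
  have hsq : HasFDerivAt (fun z : E => 1 + ‖z‖ ^ 2) (2 • innerSL ℝ z) z :=
    (hasStrictFDerivAt_norm_sq z).hasFDerivAt.const_add 1
  have h : HasFDerivAt (fun z : E => truncNorm ε z ^ s * (1 + ‖z‖ ^ 2)⁻¹) _ z :=
    ((contDiff_truncNorm hε).differentiable one_ne_zero z).hasFDerivAt.rpow_const (Or.inl hρ.ne')
      |>.mul ((hasDerivAt_inv (by positivity)).comp_hasFDerivAt z hsq)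
  rw [h.fderiv]
  simp only [neg_smul, smul_neg, Real.rpow_sub_one hρ.ne', add_apply, neg_apply, smul_apply,
    coe_innerSL_apply, real_inner_self_eq_norm_sq, nsmul_eq_mul, Nat.cast_ofNat, smul_eq_mul]
  field_simp
  ring

lemma mul_le_divergence_truncNorm {n s : ℝ} (hn : 2 ≤ n) (hs : s ≤ 0) (hε : 0 < ε) (z : E) :
    (s + 2) * (truncNorm ε z ^ s / (1 + ‖z‖ ^ 2) ^ 2) ≤
      n * (truncNorm ε z ^ s * (1 + ‖z‖ ^ 2)⁻¹) +
        fderiv ℝ (fun z : E => truncNorm ε z ^ s * (1 + ‖z‖ ^ 2)⁻¹) z z := by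
  have hρ := truncNorm_pos hε z
  have hradial : fderiv ℝ (truncNorm ε) z z / truncNorm ε z ≤ 1 / (1 + ‖z‖ ^ 2) := by
    rw [div_le_iff₀ hρ, one_div_mul_eq_div]
    exact fderiv_truncNorm_apply_self_le hε z
  rw [fderiv_truncNorm_rpow_mul_inv_apply_self hε]
  calc (s + 2) * (truncNorm ε z ^ s / (1 + ‖z‖ ^ 2) ^ 2)
      = truncNorm ε z ^ s * (1 + ‖z‖ ^ 2)⁻¹ *
          (2 + (s * (1 / (1 + ‖z‖ ^ 2)) - 2 * ‖z‖ ^ 2 / (1 + ‖z‖ ^ 2))) := by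
        field_simp
        ring
    _ ≤ truncNorm ε z ^ s * (1 + ‖z‖ ^ 2)⁻¹ *
          (n + (s * (fderiv ℝ (truncNorm ε) z z / truncNorm ε z) -
            2 * ‖z‖ ^ 2 / (1 + ‖z‖ ^ 2))) := by
        gcongr ?_ * (?_ + (?_ - _))
        exact mul_le_mul_of_nonpos_left hradial hs
    _ = _ := by ring

theorem integral_truncNorm_rpow_mul_norm_sq_le {F : Type*} [NormedAddCommGroup F]
    [InnerProductSpace ℝ F] [FiniteDimensional ℝ E] [MeasurableSpace E] [BorelSpace E]
    (μ : Measure E) [μ.IsAddHaarMeasure] (hd : 2 ≤ finrank ℝ E) {α : ℝ} (hα0 : 0 < α)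
    (hα1 : α ≤ 1) (hε : 0 < ε) {u : E → F} (hu : ContDiff ℝ 1 u) (hc : HasCompactSupport u) :
    ∫ z, (truncNorm ε z ^ (α - 1)) ^ 2 * ‖u z‖ ^ 2 ∂μ ≤
      16 / α ^ 2 * ∫ z, (truncNorm ε z ^ α) ^ 2 * ‖fderiv ℝ u z‖ ^ 2 ∂μ +
        4 * ∫ z, ‖u z‖ ^ 2 ∂μ := by
  have hρ := truncNorm_pos (E := E) hε
  have hsq z : (truncNorm ε z ^ (α - 1)) ^ 2 = truncNorm ε (z : E) ^ (2 * α - 2) := by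
    rw [← Real.rpow_mul_natCast (hρ z).le]
    ring_nf
  have hφ : ContDiff ℝ 1 fun z : E => truncNorm ε z ^ (2 * α - 2) * (1 + ‖z‖ ^ 2)⁻¹ :=
    ((contDiff_truncNorm hε).rpow_const_of_ne fun z => (hρ z).ne').mul
      ((contDiff_const.add (contDiff_norm_sq ℝ)).inv fun z => by positivity)
  have hdiv (z : E) : (truncNorm ε z ^ (α - 1)) ^ 2 ≤
      2 / α * (finrank ℝ E * (truncNorm ε z ^ (2 * α - 2) * (1 + ‖z‖ ^ 2)⁻¹) +
        fderiv ℝ (fun z : E => truncNorm ε z ^ (2 * α - 2) * (1 + ‖z‖ ^ 2)⁻¹) z z) + 2 := calc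
    _ ≤ 4 * (truncNorm ε z ^ (2 * α - 2) / (1 + ‖z‖ ^ 2) ^ 2) + 2 :=
      (hsq z).trans_le (truncNorm_rpow_le (by linarith) (by linarith) hε z)
    _ = 2 / α * ((2 * α - 2 + 2) * (truncNorm ε z ^ (2 * α - 2) / (1 + ‖z‖ ^ 2) ^ 2)) + 2 := by
      field_simp
      ring
    _ ≤ _ := by
      gcongr
      exact mul_le_divergence_truncNorm (Nat.ofNat_le_cast.2 hd) (by linarith) hε z
  have hab (z : E) : |truncNorm ε z ^ (2 * α - 2) * (1 + ‖z‖ ^ 2)⁻¹| * ‖z‖ ≤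
      truncNorm ε z ^ (α - 1) * truncNorm ε z ^ α := by
    have := hρ z
    rw [abs_of_pos (by positivity), ← div_eq_mul_inv, div_mul_eq_mul_div,
      div_le_iff₀ (by positivity)]
    calc truncNorm ε z ^ (2 * α - 2) * ‖z‖
      _ ≤ truncNorm ε z ^ (2 * α - 2) * ((1 + ‖z‖ ^ 2) * truncNorm ε z) := by
        gcongr
        exact norm_le_one_add_norm_sq_mul_truncNorm hε z
      _ = truncNorm ε z ^ (α - 1) * truncNorm ε z ^ α * (1 + ‖z‖ ^ 2) := by
        rw [← hsq, Real.rpow_sub_one (hρ z).ne']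
        field_simp
  have hb : Continuous fun z : E => truncNorm ε z ^ α :=
    (contDiff_truncNorm hε).continuous.rpow_const fun z => Or.inl (hρ z).ne'
  refine (integral_sq_mul_norm_sq_le_of_le_divergence (by positivity) hφ hb hdiv hab hu
    hc).trans_eq ?_
  ring

end TruncNorm

section WeightedNash

lemma exists_ckn_exponents {n α γ r : ℝ} (hn : 2 ≤ n) (hα0 : 0 < α) (hα1 : α < 1)
    (hγ : γ = n / (1 - α)) (hr : r = 2 * γ / (γ - 2)) :
    0 < r ∧ ∃ p θ : ℝ, Real.HolderConjugate n p ∧ 0 ≤ θ ∧ θ ≤ 1 ∧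
      (2 * α - 2) * θ + α * p * (1 - θ) = 0 ∧ 2 * θ + (r / 2 + 1) * p * (1 - θ) = r := by
  have hα : 0 < 1 - α := by linarith
  have hn1 : 0 < n - 1 := by linarith
  have hgap : 0 < n - 2 + 2 * α := by linarith
  have hr' : r = 2 * n / (n - 2 + 2 * α) := by
    have : γ - 2 = (n - 2 + 2 * α) / (1 - α) := by
      rw [hγ]
      field_simp
      ring
    rw [hr, this, hγ]
    field_simp
  have hden : 0 < 2 * (1 - α) * (n - 1) + α * n := by positivity
  refine ⟨by rw [hr']; positivity, n / (n - 1), α * n / (2 * (1 - α) * (n - 1) + α * n),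
    Real.HolderConjugate.conjExponent (by linarith), by positivity, ?_, ?_, ?_⟩
  · rw [div_le_one hden]
    linarith [mul_pos hα hn1]
  · field_simp
    ring
  · rw [hr']
    field_simp
    ring

variable {E F : Type*} [NormedAddCommGroup E] [InnerProductSpace ℝ E] [MeasurableSpace E]
  [BorelSpace E] (μ : Measure E) [NormedAddCommGroup F] [InnerProductSpace ℝ F] {α ε : ℝ}
  {u : E → F}

lemma integral_truncNorm_rpow_mul_norm_fderiv_sq_le [IsFiniteMeasureOnCompacts μ]
    (hα0 : 0 ≤ α) (hα1 : α ≤ 1) (hε : 0 < ε) (hu : ContDiff ℝ 1 u)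
    (hc : HasCompactSupport u) :
    ∫ z, (truncNorm ε z ^ α) ^ 2 * ‖fderiv ℝ u z‖ ^ 2 ∂μ ≤
      ∫ z, min 1 (‖z‖ ^ (2 * α)) * ‖fderiv ℝ u z‖ ^ 2 ∂μ + ε ^ α * ∫ z, ‖fderiv ℝ u z‖ ^ 2 ∂μ := by
  have hint {w : E → ℝ} (hw : Continuous w) : Integrable (fun z => w z * ‖fderiv ℝ u z‖ ^ 2) μ :=
    integrable_mul_norm_sq_of_hasCompactSupport hw (hu.continuous_fderiv one_ne_zero)
      (hc.fderiv ℝ)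
  have hmin : Continuous fun z : E => min 1 (‖z‖ ^ (2 * α)) :=
    continuous_const.min (continuous_norm.rpow_const fun _ => Or.inr (by positivity))
  rw [← integral_const_mul, ← integral_add (hint hmin) (hint continuous_const)]
  refine integral_mono_of_nonneg (.of_forall fun z => by positivity)
    ((hint hmin).add (hint continuous_const)) (.of_forall fun z => ?_)
  dsimp only
  rw [← add_mul, ← Real.rpow_mul_natCast (truncNorm_pos hε z).le, mul_comm α]
  gcongr
  exact truncNorm_rpow_two_mul_le hα0 hα1 hε z

variable [FiniteDimensional ℝ E] [μ.IsAddHaarMeasure]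

lemma integral_cknDensity_truncNorm_le (hd : 2 ≤ finrank ℝ E) (hα0 : 0 < α) (hα1 : α ≤ 1)
    (hε : 0 < ε) (hu : ContDiff ℝ 1 u) (hc : HasCompactSupport u) :
    ∫ z, cknDensity (truncNorm ε) α u z ∂μ ≤ (16 / α ^ 2 + 4) *
      (∫ z, (truncNorm ε z ^ α) ^ 2 * ‖fderiv ℝ u z‖ ^ 2 ∂μ + ∫ z, ‖u z‖ ^ 2 ∂μ) := by
  have hpow (s : ℝ) : Continuous fun z : E => (truncNorm ε z ^ s) ^ 2 :=
    ((contDiff_truncNorm hε).continuous.rpow_const fun z => Or.inl (truncNorm_pos hε z).ne').pow 2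
  unfold cknDensity
  rw [integral_add
    (integrable_mul_norm_sq_of_hasCompactSupport (hpow (α - 1)) hu.continuous hc)
    (integrable_mul_norm_sq_of_hasCompactSupport (hpow α) (hu.continuous_fderiv one_ne_zero)
      (hc.fderiv ℝ))]
  have hhardy := integral_truncNorm_rpow_mul_norm_sq_le μ hd hα0 hα1 hε hu hc
  have hu0 : 0 ≤ 16 / α ^ 2 * ∫ z, ‖u z‖ ^ 2 ∂μ := by positivity
  have hdu0 : 0 ≤ ∫ z, (truncNorm ε z ^ α) ^ 2 * ‖fderiv ℝ u z‖ ^ 2 ∂μ :=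
    integral_nonneg fun z => by positivity
  linarith

theorem exists_integral_norm_rpow_le_add_rpow (hd : 2 ≤ finrank ℝ E) (hα : α ∈ Set.Ioo (0 : ℝ) 1)
    {γ r : ℝ} (hγ : γ = finrank ℝ E / (1 - α)) (hr : r = 2 * γ / (γ - 2)) :
    ∃ C : ℝ, 0 < C ∧ ∀ u : E → F, ContDiff ℝ 1 u → HasCompactSupport u → ∀ ε ∈ Set.Ioc (0 : ℝ) 1,
      (∫ z, ‖u z‖ ^ r ∂μ) ^ (2 / r) ≤
        C * (∫ z, min 1 (‖z‖ ^ (2 * α)) * ‖fderiv ℝ u z‖ ^ 2 ∂μ +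
          ε ^ α * ∫ z, ‖fderiv ℝ u z‖ ^ 2 ∂μ + ∫ z, ‖u z‖ ^ 2 ∂μ) := by
  obtain ⟨hα0, hα1⟩ := hα
  obtain ⟨hr0, p, θ, hp, hθ0, hθ1, hbalρ, hbalu⟩ :=
    exists_ckn_exponents (Nat.ofNat_le_cast.2 hd) hα0 hα1 hγ hr
  obtain ⟨C, hC, hckn⟩ :=
    exists_integral_norm_rpow_le_mul_integral_cknDensity (F := F) μ hp hr0 hθ0 hθ1 hbalρ hbalu
  refine ⟨(C + 1) * (16 / α ^ 2 + 4), by positivity, fun u hu hc ε ⟨hε, hε1⟩ => ?_⟩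
  have henergy : 0 ≤ ∫ z, cknDensity (truncNorm ε) α u z ∂μ :=
    integral_nonneg (cknDensity_nonneg _ α u)
  calc (∫ z, ‖u z‖ ^ r ∂μ) ^ (2 / r)
    _ ≤ C * ∫ z, cknDensity (truncNorm ε) α u z ∂μ :=
      hckn _ u (contDiff_truncNorm hε) (truncNorm_pos hε) (norm_fderiv_truncNorm_le_one hε hε1) hu
        hc
    _ ≤ (C + 1) * ∫ z, cknDensity (truncNorm ε) α u z ∂μ := by
      gcongr
      exact le_add_of_nonneg_right zero_le_one
    _ ≤ (C + 1) * ((16 / α ^ 2 + 4) *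
          (∫ z, (truncNorm ε z ^ α) ^ 2 * ‖fderiv ℝ u z‖ ^ 2 ∂μ + ∫ z, ‖u z‖ ^ 2 ∂μ)) := by
      gcongr
      exact integral_cknDensity_truncNorm_le μ hd hα0 hα1.le hε hu hc
    _ ≤ _ := by
      rw [← mul_assoc]
      gcongr
      exact integral_truncNorm_rpow_mul_norm_fderiv_sq_le μ hα0.le hα1.le hε hu hc

theorem weighted_nash_inequality_general (hd : 2 ≤ finrank ℝ E) (hα : α ∈ Set.Ioo (0 : ℝ) 1)
    {γ r : ℝ} (hγ : γ = finrank ℝ E / (1 - α)) (hr : r = 2 * γ / (γ - 2)) :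
    ∃ C : ℝ, 0 < C ∧ ∀ G : E → F, ContDiff ℝ 1 G → HasCompactSupport G →
      (∫ z, ‖G z‖ ^ r ∂μ) ^ (2 / r) ≤
        C * (∫ z, min 1 (‖z‖ ^ (2 * α)) * ‖fderiv ℝ G z‖ ^ 2 ∂μ + ∫ z, ‖G z‖ ^ 2 ∂μ) := by
  obtain ⟨C, hC, hbound⟩ := exists_integral_norm_rpow_le_add_rpow (F := F) μ hd hα hγ hr
  refine ⟨C, hC, fun G hG hc => ?_⟩
  set D := ∫ z, min 1 (‖z‖ ^ (2 * α)) * ‖fderiv ℝ G z‖ ^ 2 ∂μ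
  set D' := ∫ z, ‖fderiv ℝ G z‖ ^ 2 ∂μ
  set M := ∫ z, ‖G z‖ ^ 2 ∂μ
  have hcont : Continuous fun ε : ℝ => C * (D + ε ^ α * D' + M) := by
    have := Real.continuous_rpow_const hα.1.le
    fun_prop
  have hlim : Filter.Tendsto (fun ε : ℝ => C * (D + ε ^ α * D' + M)) (nhdsWithin 0 (Set.Ioi 0))
      (nhds (C * (D + M))) := by
    simpa [Real.zero_rpow hα.1.ne'] using (hcont.tendsto 0).mono_left nhdsWithin_le_nhds
  exact ge_of_tendsto hlim
    (Filter.eventually_of_mem (Ioc_mem_nhdsGT zero_lt_one) (hbound G hG hc))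

end WeightedNash

/-- Weighted Nash–Sobolev inequality with weight degenerating like `|z|^{2α}` at the origin:
for `γ = d/(1−α)` and `r = 2γ/(γ−2)` there is `C = C(d,α)` such that for every
`G ∈ C_c^∞(ℝ^d)`,
`‖G‖²_{L^r} ≤ C ( ∫ min(1,|z|^{2α}) |∇G(z)|² dz + ‖G‖²_{L²} )`. -/
theorem weighted_nash_inequality (d : ℕ) (hd : 2 ≤ d) (α : ℝ) (hα : α ∈ Set.Ioo (0:ℝ) 1)
    (γ r : ℝ) (hγ : γ = d / (1 - α)) (hr : r = 2 * γ / (γ - 2)) :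
    ∃ C : ℝ, 0 < C ∧
      ∀ G : EuclideanSpace ℝ (Fin d) → ℝ,
        ContDiff ℝ (⊤ : ℕ∞) G → HasCompactSupport G →
        (∫ z, |G z| ^ r) ^ (2 / r) ≤
          C * ((∫ z, min 1 (‖z‖ ^ (2*α)) * ‖fderiv ℝ G z‖ ^ 2) + ∫ z, G z ^ 2) := by
  obtain ⟨C, hC, h⟩ := weighted_nash_inequality_general (F := ℝ)
    (volume : Measure (EuclideanSpace ℝ (Fin d))) (by simpa using hd) hα (by simpa using hγ) hr
  exact ⟨C, hC, fun G hG hc => by simpa using h G (hG.of_le (by exact_mod_cast le_top)) hc⟩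
end

section
/- Let d ≥ 1 and let A be a subalgebra (not assumed to contain the constants) of the algebra C₀(ℝ^d; ℝ) of continuous real functions vanishing at infinity. Suppose there exists f ∈ C₀(ℝ^d; ℝ) with f(x) > 0 for every x ∈ ℝ^d such that for every l ∈ ℝ^d the translate x ↦ f(x+l) belongs to A. Then A is dense in C₀(ℝ^d; ℝ) for the uniform norm. -/
open scoped ZeroAtInfty

/-! Extend functions by `0` to the one-point compactification. Evaluation at infinity splits the
constants off the unital algebra generated by the extension of `A`, so the compact
Stone–Weierstrass theorem shows that `A` is dense once it separates points and vanishes nowhere.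
The translates of `f ≠ 0` vanish nowhere. Points which they fail to separate differ by a period of
`f`, and the periods of `f` form a compact subgroup, since a translate of it is closed in a level
set of `f` at a nonzero value; but a real vector space has no nontrivial compact subgroup. -/

open Set Topology

section Unitization

variable {R B : Type*} [CommSemiring R] [Semiring B] [Algebra R B]

theorem coe_adjoin_inter_ker (s : NonUnitalSubalgebra R B) (φ : B →ₐ[R] R)
    (hs : ∀ b ∈ s, φ b = 0) :
    (Algebra.adjoin R (s : Set B) : Set B) ∩ RingHom.ker φ = s := by
  refine Subset.antisymm ?_ fun b hb => ⟨Algebra.subset_adjoin hb, hs b hb⟩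
  rintro _ ⟨hb, hφ⟩
  rw [← NonUnitalSubalgebra.unitization_range] at hb
  obtain ⟨u, rfl⟩ := hb
  have hu : u.fst = 0 := by
    simpa [hs _ u.snd.2] using hφ
  simp [hu]

end Unitization

section ExtendByZero

variable {X R : Type*} [TopologicalSpace X] [R1Space X]

/-- Extension of a function vanishing at infinity to the one-point compactification, by the value
`0` at `∞`, as a homomorphism of non-unital algebras. -/
def extendByZero [TopologicalSpace R] [CommSemiring R] [IsTopologicalSemiring R] :
    C₀(X, R) →ₙₐ[R] C(OnePoint X, R) where
  toFun f := OnePoint.continuousMapMk f 0 <| by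
    rw [Filter.coclosedCompact_eq_cocompact]
    exact f.zero_at_infty'
  map_smul' r f := by
    ext x
    cases x using OnePoint.rec <;> simp [OnePoint.continuousMapMk]
  map_zero' := by
    ext x
    cases x using OnePoint.rec <;> simp [OnePoint.continuousMapMk]
  map_add' f g := by
    ext x
    cases x using OnePoint.rec <;> simp [OnePoint.continuousMapMk]
  map_mul' f g := by
    ext x
    cases x using OnePoint.rec <;> simp [OnePoint.continuousMapMk]

section Apply

variable [TopologicalSpace R] [CommSemiring R] [IsTopologicalSemiring R]

@[simp]
theorem extendByZero_coe (f : C₀(X, R)) (x : X) : extendByZero f (x : OnePoint X) = f x :=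
  rfl

@[simp]
theorem extendByZero_infty (f : C₀(X, R)) : extendByZero f OnePoint.infty = 0 :=
  rfl

theorem separatesPoints_extendByZero_image {S : Set C₀(X, R)}
    (hsep : ((fun f : C₀(X, R) => (f : X → R)) '' S).SeparatesPoints)
    (hne : ∀ x, ∃ f ∈ S, f x ≠ 0) :
    ((fun h : C(OnePoint X, R) => (h : OnePoint X → R)) ''
      (extendByZero '' S)).SeparatesPoints := by
  simp only [SeparatesPoints, exists_mem_image] at hsep ⊢
  intro p q hpq
  cases p using OnePoint.rec <;> cases q using OnePoint.rec
  case infty.infty => exact absurd rfl hpq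
  case infty.coe y => simpa [eq_comm] using hne y
  case coe.infty x => simpa using hne x
  case coe.coe x y => simpa using hsep (ne_of_apply_ne _ hpq)

end Apply

theorem isometry_extendByZero [NormedCommRing R] :
    Isometry (extendByZero : C₀(X, R) → C(OnePoint X, R)) := by
  refine AddMonoidHomClass.isometry_of_norm extendByZero fun f => le_antisymm ?_ ?_
  · refine (ContinuousMap.norm_le _ (norm_nonneg f)).2 fun x => ?_
    cases x using OnePoint.rec with
    | infty => simp
    | coe x => exact f.toBCF.norm_coe_le_norm x
  · exact (BoundedContinuousFunction.norm_le (norm_nonneg _)).2 fun x =>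
      (extendByZero f).norm_coe_le_norm x

end ExtendByZero

section StoneWeierstrass

variable {X : Type*} [TopologicalSpace X]

theorem t2Space_of_separatesPoints {Y : Type*} [TopologicalSpace Y] [T2Space Y] {S : Set (X → Y)}
    (hcont : ∀ f ∈ S, Continuous f) (hsep : S.SeparatesPoints) : T2Space X where
  t2 _ _ hxy :=
    let ⟨f, hf, hfxy⟩ := hsep hxy
    separated_by_continuous (hcont f hf) hfxy

theorem closure_extendByZero_image [R1Space X] (A : NonUnitalSubalgebra ℝ C₀(X, ℝ))
    (hsep : ((fun f : C₀(X, ℝ) => (f : X → ℝ)) '' (A : Set C₀(X, ℝ))).SeparatesPoints)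
    (hne : ∀ x, ∃ f ∈ A, f x ≠ 0) :
    closure (extendByZero '' (A : Set C₀(X, ℝ))) = {h | h OnePoint.infty = 0} := by
  let B : NonUnitalSubalgebra ℝ C(OnePoint X, ℝ) := A.map extendByZero
  let φ : C(OnePoint X, ℝ) →ₐ[ℝ] ℝ :=
    (ContinuousMap.evalStarAlgHom ℝ ℝ (OnePoint.infty : OnePoint X)).toAlgHom
  have hφ : Continuous φ := continuous_eval_const (OnePoint.infty : OnePoint X)
  have hB : ∀ h ∈ B, φ h = 0 := by
    rintro _ ⟨f, -, rfl⟩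
    exact extendByZero_infty f
  have adjoin_dense : (Algebra.adjoin ℝ (B : Set C(OnePoint X, ℝ))).topologicalClosure = ⊤ :=
    ContinuousMap.subalgebra_topologicalClosure_eq_top_of_separatesPoints _ <|
      separatesPoints_mono (image_mono Algebra.subset_adjoin)
        (separatesPoints_extendByZero_image hsep hne)
  calc closure (B : Set C(OnePoint X, ℝ))
      = closure ((Algebra.adjoin ℝ (B : Set C(OnePoint X, ℝ)) : Set _) ∩ RingHom.ker φ) := by
        rw [coe_adjoin_inter_ker B φ hB]
    _ = closure (Algebra.adjoin ℝ (B : Set C(OnePoint X, ℝ)) : Set _) ∩ RingHom.ker φ :=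
        ContinuousMap.AlgHom.closure_ker_inter φ hφ _
    _ = {h | h OnePoint.infty = 0} := by
        rw [← Subalgebra.topologicalClosure_coe, adjoin_dense, Algebra.coe_top, univ_inter]
        rfl

theorem dense_of_separatesPoints_of_forall_exists_ne_zero (A : NonUnitalSubalgebra ℝ C₀(X, ℝ))
    (hsep : ((fun f : C₀(X, ℝ) => (f : X → ℝ)) '' (A : Set C₀(X, ℝ))).SeparatesPoints)
    (hne : ∀ x, ∃ f ∈ A, f x ≠ 0) : Dense (A : Set C₀(X, ℝ)) := by
  have : T2Space X :=
    t2Space_of_separatesPoints (forall_mem_image.2 fun f _ => f.continuous) hsep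
  intro f
  rw [isometry_extendByZero.isEmbedding.isInducing.closure_eq_preimage_closure_image,
    closure_extendByZero_image A hsep hne]
  exact extendByZero_infty f

end StoneWeierstrass

theorem isCompact_preimage_singleton_of_ne_zero {X β : Type*} [TopologicalSpace X]
    [TopologicalSpace β] [T1Space β] [Zero β] (f : C₀(X, β)) {b : β} (hb : b ≠ 0) :
    IsCompact (f ⁻¹' {b}) := by
  obtain ⟨K, hK, hfK⟩ :=
    Filter.mem_cocompact'.1 (f.zero_at_infty' (isOpen_compl_singleton.mem_nhds hb.symm))
  refine hK.of_isClosed_subset (isClosed_singleton.preimage f.continuous) ?_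
  simpa using hfK

section Periods

variable {G β : Type*} [AddGroup G]

/-- The subgroup of left periods of `f`. Left periods are the ones that matter for right
translates `x ↦ f (x + l)` when the group is not commutative. -/
def periods (f : G → β) : AddSubgroup G where
  carrier := {c | ∀ x, f (c + x) = f x}
  zero_mem' x := by rw [zero_add]
  add_mem' {a b} ha hb x := by rw [add_assoc, ha, hb]
  neg_mem' {a} ha x := by rw [← ha, add_neg_cancel_left]

theorem sub_mem_periods {f : G → β} {x y : G} (h : ∀ l, f (x + l) = f (y + l)) :
    x - y ∈ periods f := fun z => by
  simpa [sub_eq_add_neg, add_assoc] using h (-y + z)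

variable [TopologicalSpace G] [SeparatelyContinuousAdd G] [TopologicalSpace β] [T1Space β]

theorem isClosed_periods {f : G → β} (hf : Continuous f) : IsClosed (periods f : Set G) := by
  have periods_eq : (periods f : Set G) = ⋂ x, (fun c => f (c + x)) ⁻¹' {f x} := by
    ext c
    simp [periods]
  rw [periods_eq]
  exact isClosed_iInter fun x =>
    isClosed_singleton.preimage (hf.comp (continuous_add_const x))

theorem isCompact_periods [Zero β] {f : C₀(G, β)} (hf : f ≠ 0) :
    IsCompact (periods f : Set G) := by
  obtain ⟨x, hx⟩ := DFunLike.ne_iff.1 hf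
  have hlevel : IsCompact ((· + x) ⁻¹' (f ⁻¹' {f x})) :=
    (Homeomorph.addRight x).isCompact_preimage.2 (isCompact_preimage_singleton_of_ne_zero f hx)
  exact hlevel.of_isClosed_subset (isClosed_periods f.continuous) fun c hc => hc x

end Periods

theorem addSubgroup_eq_bot_of_isCompact {E : Type*} [AddCommGroup E] [Module ℝ E]
    [TopologicalSpace E] [IsTopologicalAddGroup E] [ContinuousSMul ℝ E] [T2Space E]
    {K : AddSubgroup E} (hK : IsCompact (K : Set E)) : K = ⊥ := by
  refine (AddSubgroup.eq_bot_iff_forall K).2 fun c hc => ?_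
  by_contra hc0
  have hline : IsCompact ((fun t : ℝ => t • c) ⁻¹' K) :=
    (isClosedEmbedding_smul_left hc0).isCompact_preimage hK
  obtain ⟨M, hM⟩ := hline.bddAbove
  obtain ⟨n, hn⟩ := exists_nat_gt M
  have hnc : (n : ℝ) • c ∈ K := by
    rw [Nat.cast_smul_eq_nsmul]
    exact K.nsmul_mem hc n
  exact hn.not_ge (hM hnc)

theorem translates_dense_general {G : Type*} [AddGroup G] [TopologicalSpace G]
    [SeparatelyContinuousAdd G]
    (hG : ∀ K : AddSubgroup G, IsCompact (K : Set G) → K = ⊥)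
    (A : NonUnitalSubalgebra ℝ C₀(G, ℝ)) {f : C₀(G, ℝ)} (hf : f ≠ 0)
    (htrans : ∀ l : G, ∃ g ∈ A, ∀ x, g x = f (x + l)) : Dense (A : Set C₀(G, ℝ)) := by
  refine dense_of_separatesPoints_of_forall_exists_ne_zero A ?separates ?nonvanishing
  case separates =>
    intro x y hxy
    contrapose! hxy with hA
    have htranslates (l : G) : f (x + l) = f (y + l) := by
      obtain ⟨g, hg, hgf⟩ := htrans l
      simpa only [hgf] using hA g (mem_image_of_mem _ hg)
    have hperiod := sub_mem_periods htranslates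
    rwa [hG _ (isCompact_periods hf), AddSubgroup.mem_bot, sub_eq_zero] at hperiod
  case nonvanishing =>
    intro x
    obtain ⟨z, hz⟩ := DFunLike.ne_iff.1 hf
    obtain ⟨g, hg, hgf⟩ := htrans (-x + z)
    exact ⟨g, hg, by rwa [hgf, add_neg_cancel_left]⟩

/-- Stone–Weierstrass-type density: a (not necessarily unital) subalgebra of `C₀(ℝ^d; ℝ)`
containing all translates of some everywhere-positive function `f ∈ C₀(ℝ^d; ℝ)` is dense. -/
theorem translates_dense (d : ℕ) (hd : 1 ≤ d)
    (A : NonUnitalSubalgebra ℝ (ZeroAtInftyContinuousMap (EuclideanSpace ℝ (Fin d)) ℝ))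
    (f : ZeroAtInftyContinuousMap (EuclideanSpace ℝ (Fin d)) ℝ)
    (hfpos : ∀ x, 0 < f x)
    (htrans : ∀ l : EuclideanSpace ℝ (Fin d), ∃ g ∈ A, ∀ x, g x = f (x + l)) :
    Dense (A : Set (ZeroAtInftyContinuousMap (EuclideanSpace ℝ (Fin d)) ℝ)) :=
  translates_dense_general (fun _ => addSubgroup_eq_bot_of_isCompact) A
    (DFunLike.ne_iff.2 ⟨0, (hfpos 0).ne'⟩) htrans
end

section
/- Let d ≥ 1 be an integer and α ∈ (0,1). There exists a constant c > 0 such that for every r > 0: ∫₀^∞ (1 − cos(r y)) · y^{d−1} · (y² + 1)^{−d/2−α} dy ≥ c · r^{2α} · (1 + r²)^{−d/2−α}. -/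
open MeasureTheory

/-!
Substituting `t = r y` turns the integral at `r` into
`r ^ (2 * α) * ∫ (1 - cos t) t ^ (d - 1) (t ^ 2 + r ^ 2) ^ (-d / 2 - α)`, and
`t ^ 2 + r ^ 2 ≤ (1 + r ^ 2) (t ^ 2 + 1)` splits off the factor `(1 + r ^ 2) ^ (-d / 2 - α)` since
the exponent is negative. What is left is the integral at `r = 1`, which serves as the constant.
-/

open Set Filter Asymptotics Topology

lemma one_add_sq_rpow_mul_sq_add_one_rpow_le {r : ℝ} (hr : r ≠ 0) {p : ℝ} (hp : p ≤ 0) (y : ℝ) :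
    (1 + r ^ 2) ^ p * (y ^ 2 + 1) ^ p ≤ (y ^ 2 + r ^ 2) ^ p := by
  rw [← Real.mul_rpow (by positivity) (by positivity)]
  refine Real.rpow_le_rpow_of_nonpos (by positivity) ?_ hp
  linarith [mul_nonneg (sq_nonneg r) (sq_nonneg y)]

lemma isBigO_atTop_sq_add_rpow {a : ℝ} (ha : 0 ≤ a) {p : ℝ} (hp : p ≤ 0) :
    (fun y : ℝ ↦ (y ^ 2 + a) ^ p) =O[atTop] fun y ↦ y ^ (2 * p) := by
  refine .of_bound 1 ?_
  filter_upwards [eventually_gt_atTop 0] with y hy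
  rw [Real.norm_of_nonneg (by positivity), Real.norm_of_nonneg (by positivity), one_mul,
    Real.rpow_mul hy.le, Real.rpow_two]
  exact Real.rpow_le_rpow_of_nonpos (by positivity) (by linarith) hp

lemma integrableOn_rpow_mul_sq_add_rpow {a : ℝ} (ha : 0 < a) {d p : ℝ} (hd : 0 < d)
    (hdp : d < -(2 * p)) :
    IntegrableOn (fun y : ℝ ↦ y ^ (d - 1) * (y ^ 2 + a) ^ p) (Ioi 0) := by
  have hcont : Continuous fun y : ℝ ↦ (y ^ 2 + a) ^ p :=
    Continuous.rpow_const (by fun_prop) fun y ↦ .inl (by positivity)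
  have hzero : (fun y : ℝ ↦ (y ^ 2 + a) ^ p) =O[𝓝[>] 0] fun y ↦ y ^ (-0 : ℝ) := by
    simpa only [neg_zero, Real.rpow_zero] using
      (hcont.tendsto 0).isBigO_one ℝ |>.mono nhdsWithin_le_nhds
  refine mellin_convergent_of_isBigO_scalar (hcont.locallyIntegrable.locallyIntegrableOn _)
    ?_ hdp hzero hd
  simpa only [neg_neg] using isBigO_atTop_sq_add_rpow ha.le (by linarith)

lemma integral_comp_mul_left_mul_rpow_mul_sq_add_one_rpow (φ : ℝ → ℝ) (d p : ℝ) {r : ℝ}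
    (hr : 0 < r) :
    ∫ y in Ioi (0 : ℝ), φ (r * y) * y ^ (d - 1) * (y ^ 2 + 1) ^ p =
      r ^ (-d - 2 * p) * ∫ y in Ioi (0 : ℝ), φ y * y ^ (d - 1) * (y ^ 2 + r ^ 2) ^ p := by
  have hscale (y : ℝ) (hy : y ∈ Ioi (0 : ℝ)) :
      φ (r * y) * y ^ (d - 1) * (y ^ 2 + 1) ^ p =
        r ^ (1 - d - 2 * p) *
          (φ (r * y) * (r * y) ^ (d - 1) * ((r * y) ^ 2 + r ^ 2) ^ p) := by
    have hfactor : (r * y) ^ 2 + r ^ 2 = r ^ (2 : ℝ) * (y ^ 2 + 1) := by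
      rw [Real.rpow_two]
      ring
    have hexp : r ^ (1 - d - 2 * p) * r ^ (d - 1) * r ^ (2 * p) = 1 := by
      rw [← Real.rpow_add hr, ← Real.rpow_add hr, ← Real.rpow_zero r]
      congr 1
      ring
    rw [hfactor, Real.mul_rpow hr.le (le_of_lt hy), Real.mul_rpow (by positivity) (by positivity),
      ← Real.rpow_mul hr.le]
    linear_combination -(φ (r * y) * y ^ (d - 1) * (y ^ 2 + 1) ^ p) * hexp
  have hprefactor : 1 - d - 2 * p + -1 = -d - 2 * p := by ring
  rw [setIntegral_congr_fun measurableSet_Ioi hscale, integral_const_mul,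
    integral_comp_mul_left_Ioi (fun y ↦ φ y * y ^ (d - 1) * (y ^ 2 + r ^ 2) ^ p) 0 hr,
    mul_zero, smul_eq_mul, ← mul_assoc, ← Real.rpow_neg_one, ← Real.rpow_add hr,
    hprefactor]

lemma integral_mul_rpow_le_integral_comp_mul_left {φ : ℝ → ℝ} (hφ : ∀ y, 0 < y → 0 ≤ φ y)
    {d p r : ℝ} (hp : p ≤ 0) (hr : 0 < r)
    (hint : IntegrableOn (fun y ↦ φ y * y ^ (d - 1) * (y ^ 2 + r ^ 2) ^ p) (Ioi 0)) :
    (∫ y in Ioi (0 : ℝ), φ y * y ^ (d - 1) * (y ^ 2 + 1) ^ p) * r ^ (-d - 2 * p) *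
        (1 + r ^ 2) ^ p ≤
      ∫ y in Ioi (0 : ℝ), φ (r * y) * y ^ (d - 1) * (y ^ 2 + 1) ^ p := by
  have hweight (y : ℝ) (hy : 0 < y) : 0 ≤ φ y * y ^ (d - 1) :=
    mul_nonneg (hφ y hy) (by positivity)
  have hmono : ∫ y in Ioi (0 : ℝ), (1 + r ^ 2) ^ p * (φ y * y ^ (d - 1) * (y ^ 2 + 1) ^ p) ≤
      ∫ y in Ioi (0 : ℝ), φ y * y ^ (d - 1) * (y ^ 2 + r ^ 2) ^ p := by
    refine integral_mono_of_nonneg (ae_restrict_of_forall_mem measurableSet_Ioi fun y hy ↦ ?_) hint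
      (ae_restrict_of_forall_mem measurableSet_Ioi fun y hy ↦ ?_)
    · exact mul_nonneg (by positivity) (mul_nonneg (hweight y hy) (by positivity))
    · beta_reduce
      rw [mul_left_comm]
      exact mul_le_mul_of_nonneg_left (one_add_sq_rpow_mul_sq_add_one_rpow_le hr.ne' hp y)
        (hweight y hy)
  rw [integral_const_mul] at hmono
  calc
    _ = r ^ (-d - 2 * p) *
        ((1 + r ^ 2) ^ p * ∫ y in Ioi (0 : ℝ), φ y * y ^ (d - 1) * (y ^ 2 + 1) ^ p) := by ring
    _ ≤ r ^ (-d - 2 * p) * ∫ y in Ioi (0 : ℝ), φ y * y ^ (d - 1) * (y ^ 2 + r ^ 2) ^ p := by gcongr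
    _ = _ := (integral_comp_mul_left_mul_rpow_mul_sq_add_one_rpow φ d p hr).symm

lemma one_sub_cos_nonneg (y : ℝ) : 0 ≤ 1 - Real.cos y :=
  sub_nonneg.2 (Real.cos_le_one y)

lemma integrable_one_sub_cos_mul {μ : Measure ℝ} {w : ℝ → ℝ} (hw : Integrable w μ) :
    Integrable (fun y ↦ (1 - Real.cos y) * w y) μ := by
  refine hw.bdd_mul (c := 2) (Continuous.aestronglyMeasurable (by fun_prop)) (.of_forall fun y ↦ ?_)
  rw [Real.norm_of_nonneg (one_sub_cos_nonneg y)]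
  linarith [Real.neg_one_le_cos y]

lemma setIntegral_Ioi_one_sub_cos_mul_pos {w : ℝ → ℝ} (hw : IntegrableOn w (Ioi 0))
    (hpos : ∀ y, 0 < y → 0 < w y) : 0 < ∫ y in Ioi (0 : ℝ), (1 - Real.cos y) * w y := by
  have hnonneg : 0 ≤ᵐ[volume.restrict (Ioi 0)] fun y ↦ (1 - Real.cos y) * w y :=
    ae_restrict_of_forall_mem measurableSet_Ioi fun y hy ↦
      mul_nonneg (one_sub_cos_nonneg y) (hpos y hy).le
  rw [setIntegral_pos_iff_support_of_nonneg_ae hnonneg (integrable_one_sub_cos_mul hw)]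
  have hsupport :
      Ioo 0 Real.pi ⊆ Function.support (fun y ↦ (1 - Real.cos y) * w y) ∩ Ioi 0 := by
    rintro y ⟨hy0, hyπ⟩
    have hcos : Real.cos y < 1 := by
      simpa using Real.cos_lt_cos_of_nonneg_of_le_pi le_rfl hyπ.le hy0
    exact ⟨(mul_pos (sub_pos.2 hcos) (hpos y hy0)).ne', hy0⟩
  refine lt_of_lt_of_le ?_ (measure_mono hsupport)
  simp [Real.pi_pos]

theorem kraichnan_oscillatory_lower_bound_general {d α : ℝ} (hd : 0 < d) (hα : 0 < α) :
    ∃ c : ℝ, 0 < c ∧ ∀ r : ℝ, 0 < r →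
      c * r ^ (2 * α) * (1 + r ^ 2) ^ (-d / 2 - α) ≤
        ∫ y in Ioi (0 : ℝ),
          (1 - Real.cos (r * y)) * y ^ (d - 1) * (y ^ 2 + 1) ^ (-d / 2 - α) := by
  have hweight {a : ℝ} (ha : 0 < a) :
      IntegrableOn (fun y : ℝ ↦ y ^ (d - 1) * (y ^ 2 + a) ^ (-d / 2 - α)) (Ioi 0) :=
    integrableOn_rpow_mul_sq_add_rpow ha hd (by linarith)
  refine ⟨∫ y in Ioi (0 : ℝ), (1 - Real.cos y) * y ^ (d - 1) * (y ^ 2 + 1) ^ (-d / 2 - α),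
    ?_, fun r hr ↦ ?_⟩
  · simpa only [mul_assoc] using
      setIntegral_Ioi_one_sub_cos_mul_pos (hweight one_pos) fun y hy ↦ by positivity
  · have hint : IntegrableOn
        (fun y ↦ (1 - Real.cos y) * y ^ (d - 1) * (y ^ 2 + r ^ 2) ^ (-d / 2 - α)) (Ioi 0) := by
      simpa only [IntegrableOn, mul_assoc] using
        integrable_one_sub_cos_mul (hweight (sq_pos_of_pos hr))
    have hexp : -d - 2 * (-d / 2 - α) = 2 * α := by ring
    simpa only [hexp] using integral_mul_rpow_le_integral_comp_mul_left
      (fun y _ ↦ one_sub_cos_nonneg y) (by linarith) hr hint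

/-- Nondegeneracy of the Kraichnan covariance: for `d ≥ 1` and `α ∈ (0,1)` there is `c > 0`
such that for all `r > 0`,
`∫₀^∞ (1 − cos(ry)) y^{d−1} (y²+1)^{−d/2−α} dy ≥ c r^{2α} (1+r²)^{−d/2−α}`. -/
theorem kraichnan_oscillatory_lower_bound (d : ℕ) (hd : 1 ≤ d) (α : ℝ)
    (hα : α ∈ Set.Ioo (0:ℝ) 1) :
    ∃ c : ℝ, 0 < c ∧ ∀ r : ℝ, 0 < r →
      c * r ^ (2*α) * (1 + r^2) ^ (-(d:ℝ)/2 - α) ≤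
        ∫ y in Set.Ioi (0:ℝ),
          (1 - Real.cos (r * y)) * y ^ (d-1) * (y^2 + 1) ^ (-(d:ℝ)/2 - α) := by
  simpa only [← Nat.cast_pred hd, Real.rpow_natCast] using
    kraichnan_oscillatory_lower_bound_general (Nat.cast_pos.2 hd) hα.1
end

section
/- Let d ≥ 2 be an integer, p ∈ [1,∞), s ∈ (0,1), and let (X, μ) be a σ-finite measure space. There exists a constant C depending only on d, s and p such that for every jointly measurable F : X × ℝ^d → ℝ with ∫_X ∫_{ℝ^d} |F(ω,x)|^p dx dμ(ω) < ∞, writing N(z) := ∫_X ∫_{ℝ^d} |F(ω,x+z) − F(ω,x)|^p dx dμ(ω) for z ∈ ℝ^d, one has: sup_{ε>0} ε^{−sp} ∮_{S^{d−1}} N(ε ẑ) σ(dẑ) ≤ sup_{z≠0} |z|^{−sp} N(z) ≤ C · sup_{ε>0} ε^{−sp} ∮_{S^{d−1}} N(ε ẑ) σ(dẑ), where σ is the normalized surface measure on the unit sphere S^{d−1} ⊂ ℝ^d and ∮ denotes the average with respect to σ. -/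
open MeasureTheory
open scoped ENNReal

/-- The `p`-th power increment functional
`N(z) = ∫_X ∫_{ℝ^d} |F(ω,x+z) − F(ω,x)|^p dx dμ(ω)`. -/
noncomputable def incrementFunctional (d : ℕ) {X : Type} [MeasurableSpace X] (μ : Measure X)
    (p : ℝ) (F : X × EuclideanSpace ℝ (Fin d) → ℝ) (z : EuclideanSpace ℝ (Fin d)) : ℝ≥0∞ :=
  ∫⁻ ω, ∫⁻ x, ENNReal.ofReal (|F (ω, x + z) - F (ω, x)| ^ p) ∂volume ∂μ

/-!
Quasi-subadditivity `N z ≤ K (N w + N (z - w))` bounds `N z` by the mean of `N` over a ball of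
radius comparable to `‖z‖`: as `w` runs over the ball of radius `‖z‖`, both `w` and `z - w` stay in
the ball of radius `2 ‖z‖`. In polar coordinates this mean is controlled by the averages of `N` over
spheres of radius less than `2 ‖z‖`. For increments, `K = 2 ^ p` works, because the increment by `z`
is the increment by `w` plus a translate of the increment by `z - w`.
-/

section SphericalAverages

open Metric Set Measure Module

variable {E : Type*} [NormedAddCommGroup E] [NormedSpace ℝ E]

lemma norm_smul_coe_sphere {r : ℝ} (hr : 0 ≤ r) (θ : sphere (0 : E) 1) : ‖r • (θ : E)‖ = r := by
  rw [norm_smul, norm_eq_of_mem_sphere, mul_one, Real.norm_of_nonneg hr]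

variable [MeasurableSpace E] [BorelSpace E] [FiniteDimensional ℝ E] [Nontrivial E]
  (ν : Measure E) [ν.IsAddHaarMeasure]

lemma lintegral_eq_lintegral_Ioi_lintegral_sphere {f : E → ℝ≥0∞} (hf : Measurable f) :
    ∫⁻ x, f x ∂ν = ∫⁻ r : Ioi (0 : ℝ), ∫⁻ θ : sphere (0 : E) 1, f (r.1 • θ.1) ∂ν.toSphere
      ∂(volumeIoiPow (finrank ℝ E - 1)) := by
  let g : sphere (0 : E) 1 × Ioi (0 : ℝ) → ℝ≥0∞ := fun q ↦ f (q.2.1 • q.1.1)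
  have hg : Measurable g := hf.comp (by fun_prop)
  have polar (x : ({0}ᶜ : Set E)) : g (homeomorphUnitSphereProd E x) = f x := by
    simp [g, homeomorphUnitSphereProd, smul_smul, norm_ne_zero_iff.2 x.2]
  calc ∫⁻ x, f x ∂ν
    _ = ∫⁻ x : ({0}ᶜ : Set E), f x ∂(ν.comap (↑)) := by
      rw [lintegral_subtype_comap (measurableSet_singleton _).compl f, restrict_compl_singleton]
    _ = ∫⁻ q, g q ∂(ν.toSphere.prod (volumeIoiPow (finrank ℝ E - 1))) := by
      rw [← ν.measurePreserving_homeomorphUnitSphereProd.lintegral_comp hg]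
      exact lintegral_congr fun x ↦ (polar x).symm
    _ = _ := lintegral_prod_symm' g hg

lemma setLIntegral_ball_le_of_laverage_sphere_le {f : E → ℝ≥0∞} (hf : Measurable f) {R : ℝ}
    {M : ℝ≥0∞}
    (hM : ∀ r, 0 < r → r < R → ⨍⁻ θ : sphere (0 : E) 1, f (r • (θ : E)) ∂ν.toSphere ≤ M) :
    ∫⁻ x in ball 0 R, f x ∂ν ≤ M * ν (ball 0 R) := by
  rw [← setLIntegral_const, ← lintegral_indicator measurableSet_ball,
    ← lintegral_indicator measurableSet_ball,
    lintegral_eq_lintegral_Ioi_lintegral_sphere ν (hf.indicator measurableSet_ball),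
    lintegral_eq_lintegral_Ioi_lintegral_sphere ν (measurable_const.indicator measurableSet_ball)]
  refine lintegral_mono fun ⟨r, (hr : 0 < r)⟩ ↦ ?_
  simp only [indicator, mem_ball_zero_iff, norm_smul_coe_sphere hr.le]
  split_ifs with hrR
  · rw [← measure_mul_laverage, lintegral_const, mul_comm]
    gcongr
    exact hM r hr hrR
  · rfl

end SphericalAverages

section QuasiSubadditive

open Metric

variable {E : Type*} [SeminormedAddCommGroup E] [MeasurableSpace E] [BorelSpace E]
  (ν : Measure E) [ν.IsAddLeftInvariant] [ν.IsNegInvariant]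

lemma setLIntegral_ball_sub_left_le (f : E → ℝ≥0∞) (z : E) (r : ℝ) :
    ∫⁻ w in ball 0 r, f (z - w) ∂ν ≤ ∫⁻ w in ball 0 (‖z‖ + r), f w ∂ν := by
  rw [← lintegral_indicator measurableSet_ball, ← lintegral_indicator measurableSet_ball,
    ← lintegral_sub_left_eq_self ((ball 0 (‖z‖ + r)).indicator f) z]
  refine lintegral_mono <| Set.indicator_le fun w hw ↦ ?_
  have hzw : z - w ∈ ball (0 : E) (‖z‖ + r) := by
    rw [mem_ball_zero_iff] at hw ⊢
    linarith [norm_sub_le z w]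
  exact (Set.indicator_of_mem hzw f).ge

lemma mul_measure_ball_le_setLIntegral {N : E → ℝ≥0∞} (hN : Measurable N) {K : ℝ≥0∞} {z : E}
    (hK : ∀ w, N z ≤ K * (N w + N (z - w))) (r : ℝ) :
    N z * ν (ball 0 r) ≤ 2 * K * ∫⁻ w in ball 0 (‖z‖ + r), N w ∂ν := by
  calc N z * ν (ball 0 r)
    _ = ∫⁻ _ in ball 0 r, N z ∂ν := (setLIntegral_const ..).symm
    _ ≤ ∫⁻ w in ball 0 r, K * (N w + N (z - w)) ∂ν := lintegral_mono hK
    _ = K * (∫⁻ w in ball 0 r, N w ∂ν + ∫⁻ w in ball 0 r, N (z - w) ∂ν) := by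
      rw [← lintegral_add_left hN, lintegral_const_mul _ (by fun_prop)]
    _ ≤ K * (∫⁻ w in ball 0 (‖z‖ + r), N w ∂ν + ∫⁻ w in ball 0 (‖z‖ + r), N w ∂ν) := by
      gcongr K * (?_ + ?_)
      · exact lintegral_mono_set (ball_subset_ball (le_add_of_nonneg_left (norm_nonneg z)))
      · exact setLIntegral_ball_sub_left_le ν N z r
    _ = 2 * K * ∫⁻ w in ball 0 (‖z‖ + r), N w ∂ν := by ring

end QuasiSubadditive

lemma ofReal_rpow_neg_mul_le_iff {r : ℝ} (hr : 0 < r) (a : ℝ) (b c : ℝ≥0∞) :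
    ENNReal.ofReal (r ^ (-a)) * b ≤ c ↔ b ≤ ENNReal.ofReal (r ^ a) * c := by
  have hra : 0 < r ^ a := Real.rpow_pos_of_pos hr a
  rw [Real.rpow_neg hr.le, ENNReal.ofReal_inv_of_pos hra,
    ENNReal.inv_mul_le_iff (ENNReal.ofReal_pos.2 hra).ne' ENNReal.ofReal_ne_top]

section GrowthSup

open Metric Module

variable {E : Type*} [NormedAddCommGroup E]

/-- The supremum `sup_{z ≠ 0} ‖z‖ ^ (-a) N(z)`, the best constant in `N z ≤ M ‖z‖ ^ a` away from
the origin. With `a = s * p` and `N` the `p`-th power increment functional, it is the `p`-th power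
of the Besov seminorm of order `s`. -/
noncomputable def growthSup (a : ℝ) (N : E → ℝ≥0∞) : ℝ≥0∞ :=
  ⨆ (z : E) (_ : z ≠ 0), ENNReal.ofReal (‖z‖ ^ (-a)) * N z

lemma growthSup_le_iff {a : ℝ} {N : E → ℝ≥0∞} {M : ℝ≥0∞} :
    growthSup a N ≤ M ↔ ∀ z ≠ 0, N z ≤ ENNReal.ofReal (‖z‖ ^ a) * M :=
  iSup₂_le_iff.trans <| forall₂_congr fun _ hz ↦ ofReal_rpow_neg_mul_le_iff (norm_pos_iff.2 hz) ..

variable [NormedSpace ℝ E] [MeasurableSpace E] (ν : Measure E)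

/-- The analogue of `growthSup` in which `N` is replaced by its averages over the spheres of
radius `ε` centred at the origin, with respect to the surface measure induced by `ν`. -/
noncomputable def sphericalGrowthSup (a : ℝ) (N : E → ℝ≥0∞) : ℝ≥0∞ :=
  ⨆ (ε : ℝ) (_ : 0 < ε),
    ENNReal.ofReal (ε ^ (-a)) * ⨍⁻ θ : sphere (0 : E) 1, N (ε • (θ : E)) ∂ν.toSphere

variable {ν} in
lemma sphericalGrowthSup_le_iff {a : ℝ} {N : E → ℝ≥0∞} {M : ℝ≥0∞} :
    sphericalGrowthSup ν a N ≤ M ↔ ∀ r, 0 < r →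
      ⨍⁻ θ : sphere (0 : E) 1, N (r • (θ : E)) ∂ν.toSphere ≤ ENNReal.ofReal (r ^ a) * M :=
  iSup₂_le_iff.trans <| forall₂_congr fun _ hr ↦ ofReal_rpow_neg_mul_le_iff hr ..

theorem sphericalGrowthSup_le_growthSup (a : ℝ) (N : E → ℝ≥0∞) :
    sphericalGrowthSup ν a N ≤ growthSup a N := by
  refine sphericalGrowthSup_le_iff.2 fun r hr ↦ ?_
  refine (laverage_le_essSup _).trans (essSup_le_of_ae_le _ (.of_forall fun θ ↦ ?_))
  have hnorm : ‖r • (θ : E)‖ = r := norm_smul_coe_sphere hr.le θ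
  simpa only [hnorm] using growthSup_le_iff.1 le_rfl (r • (θ : E)) (norm_pos_iff.1 (by rwa [hnorm]))

variable [BorelSpace E] [FiniteDimensional ℝ E] [Nontrivial E] [ν.IsAddHaarMeasure]

lemma setLIntegral_ball_le_mul_sphericalGrowthSup {a : ℝ} (ha : 0 ≤ a) {N : E → ℝ≥0∞}
    (hN : Measurable N) (R : ℝ) :
    ∫⁻ w in ball 0 R, N w ∂ν ≤
      ENNReal.ofReal (R ^ a) * sphericalGrowthSup ν a N * ν (ball 0 R) := by
  refine setLIntegral_ball_le_of_laverage_sphere_le ν hN fun r hr hrR ↦ ?_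
  calc ⨍⁻ θ : sphere (0 : E) 1, N (r • (θ : E)) ∂ν.toSphere
    _ ≤ ENNReal.ofReal (r ^ a) * sphericalGrowthSup ν a N :=
      sphericalGrowthSup_le_iff.1 le_rfl r hr
    _ ≤ ENNReal.ofReal (R ^ a) * sphericalGrowthSup ν a N := by gcongr

theorem growthSup_le_mul_sphericalGrowthSup {a : ℝ} (ha : 0 ≤ a) {N : E → ℝ≥0∞}
    (hN : Measurable N) {K : ℝ≥0∞} (hK : ∀ z w, N z ≤ K * (N w + N (z - w))) :
    growthSup a N ≤ 2 ^ (a + finrank ℝ E + 1) * K * sphericalGrowthSup ν a N := by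
  refine growthSup_le_iff.2 fun z hz ↦ ?_
  have hz' : 0 < ‖z‖ := norm_pos_iff.2 hz
  set S := sphericalGrowthSup ν a N
  set V := ν (ball 0 ‖z‖)
  have hV : ν (ball 0 (2 * ‖z‖)) = 2 ^ finrank ℝ E * V := by
    rw [Measure.addHaar_ball_mul_of_pos ν 0 two_pos, ENNReal.ofReal_pow zero_le_two,
      ENNReal.ofReal_ofNat]
  have hpow : ENNReal.ofReal ((2 * ‖z‖) ^ a) = 2 ^ a * ENNReal.ofReal (‖z‖ ^ a) := by
    rw [Real.mul_rpow zero_le_two hz'.le, ENNReal.ofReal_mul (by positivity),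
      ← ENNReal.ofReal_rpow_of_pos two_pos, ENNReal.ofReal_ofNat]
  have hconst : (2 : ℝ≥0∞) ^ (a + finrank ℝ E + 1) = 2 ^ a * 2 ^ finrank ℝ E * 2 := by
    rw [ENNReal.rpow_add _ _ two_ne_zero ENNReal.ofNat_ne_top, ENNReal.rpow_one,
      ENNReal.rpow_add _ _ two_ne_zero ENNReal.ofNat_ne_top, ENNReal.rpow_natCast]
  have hV_pos : V ≠ 0 := (measure_ball_pos ν 0 hz').ne'
  have hV_top : V ≠ ⊤ := measure_ball_lt_top.ne
  rw [← ENNReal.mul_le_mul_iff_left hV_pos hV_top]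
  calc N z * V
    _ ≤ 2 * K * ∫⁻ w in ball 0 (2 * ‖z‖), N w ∂ν := by
      simpa only [two_mul ‖z‖] using mul_measure_ball_le_setLIntegral ν hN (hK z) ‖z‖
    _ ≤ 2 * K * (ENNReal.ofReal ((2 * ‖z‖) ^ a) * S * ν (ball 0 (2 * ‖z‖))) := by
      gcongr
      exact setLIntegral_ball_le_mul_sphericalGrowthSup ν ha hN (2 * ‖z‖)
    _ = ENNReal.ofReal (‖z‖ ^ a) * (2 ^ (a + finrank ℝ E + 1) * K * S) * V := by
      rw [hpow, hV, hconst]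
      ring

end GrowthSup

section IncrementIntegral

variable {X E G : Type*} [MeasurableSpace X] [MeasurableSpace E] [NormedAddCommGroup G]

/-- The integral over `X × E` of the `p`-th power of the increments of `F` by `z` in the second
variable. This is `incrementFunctional` for a general space of shifts and values in `G`, written
as a single integral over the product so that translations in `E` act on the integration domain. -/
noncomputable def incrementIntegral [Add E] (μ : Measure X) (ν : Measure E) (p : ℝ) (F : X × E → G)
    (z : E) : ℝ≥0∞ :=
  ∫⁻ q, ‖F (q.1, q.2 + z) - F q‖ₑ ^ p ∂(μ.prod ν)

lemma measurable_incrementIntegral [Add E] [MeasurableAdd₂ E] (μ : Measure X) (ν : Measure E)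
    [SFinite μ] [SFinite ν] (p : ℝ) {F : X × E → G} (hF : StronglyMeasurable F) :
    Measurable (incrementIntegral μ ν p F) := by
  have hshift : Measurable fun q : E × X × E ↦ (q.2.1, q.2.2 + q.1) := by fun_prop
  exact (((hF.comp_measurable hshift).sub (hF.comp_measurable measurable_snd)).enorm.pow_const
    p).lintegral_prod_right'

lemma measurable_enorm_shift_sub_rpow [Add E] [MeasurableAdd E] (p : ℝ) {F : X × E → G}
    (hF : StronglyMeasurable F) (z : E) :
    Measurable fun q : X × E ↦ ‖F (q.1, q.2 + z) - F q‖ₑ ^ p := by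
  have hshift : Measurable fun q : X × E ↦ (q.1, q.2 + z) := by fun_prop
  exact ((hF.comp_measurable hshift).sub hF).enorm.pow_const p

variable [AddCommGroup E] [MeasurableAdd E] (μ : Measure X) (ν : Measure E)
  [SFinite μ] [SFinite ν] [ν.IsAddRightInvariant]

lemma lintegral_enorm_shift_sub_shift (p : ℝ) {F : X × E → G} (hF : StronglyMeasurable F)
    (z w : E) :
    ∫⁻ q, ‖F (q.1, q.2 + z) - F (q.1, q.2 + w)‖ₑ ^ p ∂(μ.prod ν) =
      incrementIntegral μ ν p F (z - w) := by
  have hpres : MeasurePreserving (fun q : X × E ↦ (q.1, q.2 + w)) (μ.prod ν) (μ.prod ν) :=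
    (MeasurePreserving.id μ).prod (measurePreserving_add_right ν w)
  rw [incrementIntegral,
    ← hpres.lintegral_comp (measurable_enorm_shift_sub_rpow p hF (z - w))]
  simp only [add_assoc, add_sub_cancel]

lemma incrementIntegral_le_two_rpow_mul_add {p : ℝ} (hp : 0 ≤ p) {F : X × E → G}
    (hF : StronglyMeasurable F) (z w : E) :
    incrementIntegral μ ν p F z ≤
      2 ^ p * (incrementIntegral μ ν p F w + incrementIntegral μ ν p F (z - w)) := by
  rw [← lintegral_enorm_shift_sub_shift μ ν p hF z w, incrementIntegral, incrementIntegral,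
    ← lintegral_add_left (measurable_enorm_shift_sub_rpow p hF w),
    ← lintegral_const_mul' _ _ (ENNReal.rpow_ne_top_of_nonneg hp ENNReal.ofNat_ne_top)]
  refine lintegral_mono fun q ↦ ?_
  calc ‖F (q.1, q.2 + z) - F q‖ₑ ^ p
    _ = ‖(F (q.1, q.2 + w) - F q) + (F (q.1, q.2 + z) - F (q.1, q.2 + w))‖ₑ ^ p := by
      rw [sub_add_sub_cancel']
    _ ≤ (‖F (q.1, q.2 + w) - F q‖ₑ + ‖F (q.1, q.2 + z) - F (q.1, q.2 + w)‖ₑ) ^ p := by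
      gcongr
      exact enorm_add_le _ _
    _ ≤ _ := ENNReal.add_rpow_le_two_rpow_mul_rpow_add_rpow _ _ hp

end IncrementIntegral

lemma incrementFunctional_eq_incrementIntegral {d : ℕ} {X : Type} [MeasurableSpace X]
    (μ : Measure X) {p : ℝ} (hp : 0 ≤ p) {F : X × EuclideanSpace ℝ (Fin d) → ℝ}
    (hF : Measurable F) :
    incrementFunctional d μ p F = incrementIntegral μ volume p F := by
  ext z
  rw [incrementIntegral, lintegral_prod _
    (measurable_enorm_shift_sub_rpow p hF.stronglyMeasurable z).aemeasurable]
  simp only [incrementFunctional, Real.enorm_eq_ofReal_abs,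
    ENNReal.ofReal_rpow_of_nonneg (abs_nonneg _) hp]

theorem besov_seminorm_spherical_equivalence_general {X E G : Type*} [MeasurableSpace X]
    [NormedAddCommGroup E] [NormedSpace ℝ E] [FiniteDimensional ℝ E] [Nontrivial E]
    [MeasurableSpace E] [BorelSpace E] [NormedAddCommGroup G] (μ : Measure X) [SFinite μ]
    (ν : Measure E) [ν.IsAddHaarMeasure] {p a : ℝ} (hp : 0 ≤ p) (ha : 0 ≤ a) {F : X × E → G}
    (hF : StronglyMeasurable F) :
    sphericalGrowthSup ν a (incrementIntegral μ ν p F) ≤ growthSup a (incrementIntegral μ ν p F) ∧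
      growthSup a (incrementIntegral μ ν p F) ≤ 2 ^ (a + Module.finrank ℝ E + 1) * 2 ^ p *
        sphericalGrowthSup ν a (incrementIntegral μ ν p F) :=
  ⟨sphericalGrowthSup_le_growthSup ν a _,
    growthSup_le_mul_sphericalGrowthSup ν ha (measurable_incrementIntegral μ ν p hF)
      (incrementIntegral_le_two_rpow_mul_add μ ν hp hF)⟩

/-- Equivalence of the full Besov-type increment seminorm with the seminorm built from
spherical averages of increments: with `N(z)` as above and `σ` the normalized surface
measure on `S^{d−1}`,
`sup_{ε>0} ε^{−sp} ∮ N(ε zh) σ(dzh) ≤ sup_{z≠0} |z|^{−sp} N(z)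
  ≤ C sup_{ε>0} ε^{−sp} ∮ N(ε zh) σ(dzh)` with `C = C(d,s,p)`. -/
theorem besov_seminorm_spherical_equivalence (d : ℕ) (hd : 2 ≤ d) (p s : ℝ)
    (hp : 1 ≤ p) (hs : s ∈ Set.Ioo (0:ℝ) 1) :
    ∃ C : ℝ, 0 < C ∧
      ∀ (X : Type) (_ : MeasurableSpace X) (μ : Measure X), SigmaFinite μ →
      ∀ F : X × EuclideanSpace ℝ (Fin d) → ℝ, Measurable F →
      (∫⁻ ω, ∫⁻ x, ENNReal.ofReal (|F (ω, x)| ^ p) ∂volume ∂μ) < ⊤ →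
      (⨆ (ε : ℝ) (_ : 0 < ε),
          ENNReal.ofReal (ε ^ (-(s*p))) *
            ⨍⁻ zh, incrementFunctional d μ p F (ε • (zh : EuclideanSpace ℝ (Fin d)))
              ∂((volume : Measure (EuclideanSpace ℝ (Fin d))).toSphere)) ≤
        (⨆ (z : EuclideanSpace ℝ (Fin d)) (_ : z ≠ 0),
          ENNReal.ofReal (‖z‖ ^ (-(s*p))) * incrementFunctional d μ p F z) ∧
      (⨆ (z : EuclideanSpace ℝ (Fin d)) (_ : z ≠ 0),
          ENNReal.ofReal (‖z‖ ^ (-(s*p))) * incrementFunctional d μ p F z) ≤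
        ENNReal.ofReal C *
          ⨆ (ε : ℝ) (_ : 0 < ε),
            ENNReal.ofReal (ε ^ (-(s*p))) *
              ⨍⁻ zh, incrementFunctional d μ p F (ε • (zh : EuclideanSpace ℝ (Fin d)))
                ∂((volume : Measure (EuclideanSpace ℝ (Fin d))).toSphere) := by
  have : NeZero d := ⟨by lia⟩
  have hp_nonneg : 0 ≤ p := by linarith
  refine ⟨2 ^ (s * p + d + 1) * 2 ^ p, by positivity, fun X _ μ _ F hF _ ↦ ?_⟩
  rw [incrementFunctional_eq_incrementIntegral μ hp_nonneg hF, ENNReal.ofReal_mul (by positivity),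
    ← ENNReal.ofReal_rpow_of_pos two_pos, ← ENNReal.ofReal_rpow_of_pos two_pos,
    ENNReal.ofReal_ofNat]
  simpa only [growthSup, sphericalGrowthSup, finrank_euclideanSpace_fin] using
    besov_seminorm_spherical_equivalence_general μ (volume : Measure (EuclideanSpace ℝ (Fin d)))
      hp_nonneg (mul_nonneg hs.1.le hp_nonneg) hF.stronglyMeasurable
end
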